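/- arXiv:2603.03395 — 8 statements merged into one kernel-verified Lean document; each statement's English description precedes it below -/
import Mathlib

section
/- For every real number x in the interval [0,1] there exists a digit sequence a : ℕ → {0,1,...,s-1} such that x = β_{a(0)} + ∑_{k=1}^∞ β_{a(k)} · ∏_{j=0}^{k-1} q_{a(j)}; that is, every number in [0,1] admits a Q_s-representation. -/
open Filter

/-- The `Q_s`-value of a digit sequence `a : ℕ → ℕ` (with digits `< s`) with respect to
the weights `q`:  `val(a) = β_{a 0} + ∑_{k≥1} β_{a k} · ∏_{j<k} q_{a j}`,
where `β_j = ∑_{i<j} q i`. -/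
noncomputable def qsVal (q : ℕ → ℝ) (a : ℕ → ℕ) : ℝ :=
  ∑' k : ℕ, (∑ i ∈ Finset.range (a k), q i) * ∏ j ∈ Finset.range k, q (a j)

/-!
If the intervals `[β_d, β_d + q_d]`, `d < s`, cover `[0, 1]`, then every `y ∈ [0, 1]` can be written
as `y = β_d + q_d z` with a digit `d` and a remainder `z ∈ [0, 1]`. Iterating this from `x` yields
digits `a n` and remainders `r n`, and unrolling the recursion shows that the `n`-th partial sum of
the series differs from `x` by `(∏_{j<n} q_{a j}) r n`. This error is at most `ρ ^ n` with
`ρ = max q < 1`, so it vanishes in the limit.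
-/

theorem exists_lt_mem_Icc_succ {α : Type*} [LinearOrder α] {f : ℕ → α} {y : α} {s : ℕ}
    (hs : 0 < s) (hy : y ∈ Set.Icc (f 0) (f s)) : ∃ d < s, y ∈ Set.Icc (f d) (f (d + 1)) := by
  induction s, Nat.succ_le_iff.mpr hs using Nat.le_induction with
  | base => exact ⟨0, one_pos, hy⟩
  | succ n hn ih =>
    rcases le_total y (f n) with hle | hge
    · obtain ⟨d, hd, hyd⟩ := ih hn ⟨hy.1, hle⟩
      exact ⟨d, hd.trans n.lt_succ_self, hyd⟩
    · exact ⟨n, n.lt_succ_self, hge, hy.2⟩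

theorem sum_range_mul_prod_range_add {R : Type*} [CommSemiring R] {b p r : ℕ → R}
    (h : ∀ n, r n = b n + p n * r (n + 1)) (n : ℕ) :
    ∑ k ∈ Finset.range n, b k * ∏ j ∈ Finset.range k, p j + (∏ j ∈ Finset.range n, p j) * r n
      = r 0 := by
  induction n with
  | zero => simp
  | succ n ih =>
    rw [← ih, h n, Finset.sum_range_succ, Finset.prod_range_succ]
    ring

theorem hasSum_of_tendsto_sum_range_of_nonneg {M : Type*} [AddCommMonoid M] [LinearOrder M]
    [IsOrderedAddMonoid M] [TopologicalSpace M] [OrderTopology M] {f : ℕ → M} {l : M}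
    (hf : ∀ n, 0 ≤ f n) (h : Tendsto (fun n => ∑ k ∈ Finset.range n, f k) atTop (nhds l)) :
    HasSum f l := by
  have hmono := Finset.sum_mono_set_of_nonneg hf
  refine hasSum_of_isLUB_of_nonneg l hf ⟨?_, fun u hu => le_of_tendsto' h fun n => hu ⟨_, rfl⟩⟩
  rintro _ ⟨t, rfl⟩
  obtain ⟨n, htn⟩ := t.exists_nat_subset_range
  exact (hmono htn).trans ((hmono.comp Finset.range_mono).ge_of_tendsto h n)

theorem lt_sum_of_pos_of_one_lt_card {ι M : Type*} [AddCommMonoid M] [PartialOrder M]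
    [IsOrderedCancelAddMonoid M] {t : Finset ι} {f : ι → M} (ht : 1 < t.card)
    (hf : ∀ i ∈ t, 0 < f i) {i : ι} (hi : i ∈ t) : f i < ∑ j ∈ t, f j := by
  obtain ⟨j, hj, hji⟩ := Finset.exists_mem_ne ht i
  exact Finset.single_lt_sum hji hi hj (hf j hj) fun k hk _ => (hf k hk).le

section OrderedField

variable {K : Type*} [Field K] [LinearOrder K] [IsStrictOrderedRing K]

theorem exists_mem_Icc_zero_one_eq_add_mul {b c y : K} (hc : 0 ≤ c)
    (hy : y ∈ Set.Icc b (b + c)) : ∃ z ∈ Set.Icc (0 : K) 1, y = b + c * z := by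
  rw [← segment_eq_Icc (le_add_of_nonneg_right hc), segment_eq_image'] at hy
  obtain ⟨z, hz, rfl⟩ := hy
  exact ⟨z, hz, by simp [mul_comm]⟩

variable {s : ℕ} {q : ℕ → K}

theorem exists_digit_remainder (hq : ∀ i < s, 0 ≤ q i)
    (hsum : 1 ≤ ∑ i ∈ Finset.range s, q i) {y : K} (hy : y ∈ Set.Icc (0 : K) 1) :
    ∃ d < s, ∃ z ∈ Set.Icc (0 : K) 1, y = ∑ i ∈ Finset.range d, q i + q d * z := by
  have hs : 0 < s := by
    rw [Nat.pos_iff_ne_zero]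
    rintro rfl
    exact hsum.not_gt (by simp)
  obtain ⟨d, hd, hyd⟩ := exists_lt_mem_Icc_succ (f := fun n => ∑ i ∈ Finset.range n, q i) hs
    ⟨by simpa using hy.1, hy.2.trans hsum⟩
  rw [Finset.sum_range_succ] at hyd
  exact ⟨d, hd, exists_mem_Icc_zero_one_eq_add_mul (hq d hd) hyd⟩

theorem exists_digits_remainders (hq : ∀ i < s, 0 ≤ q i)
    (hsum : 1 ≤ ∑ i ∈ Finset.range s, q i) {x : K} (hx : x ∈ Set.Icc (0 : K) 1) :
    ∃ (a : ℕ → ℕ) (r : ℕ → K), r 0 = x ∧ (∀ n, a n < s) ∧ (∀ n, r n ∈ Set.Icc (0 : K) 1) ∧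
      ∀ n, r n = ∑ i ∈ Finset.range (a n), q i + q (a n) * r (n + 1) := by
  choose! digit digit_lt rem rem_mem eq_rem using
    fun y (hy : y ∈ Set.Icc (0 : K) 1) => exists_digit_remainder hq hsum hy
  have iterate_mem (n : ℕ) : rem^[n] x ∈ Set.Icc (0 : K) 1 := Set.MapsTo.iterate rem_mem n hx
  refine ⟨fun n => digit (rem^[n] x), fun n => rem^[n] x, rfl,
    fun n => digit_lt _ (iterate_mem n), iterate_mem, fun n => ?_⟩
  simpa only [Function.iterate_succ_apply'] using eq_rem _ (iterate_mem n)

variable [Archimedean K] [TopologicalSpace K] [OrderTopology K]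

theorem tendsto_prod_range_mul_zero {p r : ℕ → K} {ρ B : K} (hp : ∀ n, p n ∈ Set.Icc 0 ρ)
    (hρ : ρ < 1) (hr : ∀ n, r n ∈ Set.Icc 0 B) :
    Tendsto (fun n => (∏ j ∈ Finset.range n, p j) * r n) atTop (nhds 0) := by
  have prod_nonneg (n : ℕ) : 0 ≤ ∏ j ∈ Finset.range n, p j :=
    Finset.prod_nonneg fun j _ => (hp j).1
  have prod_le (n : ℕ) : ∏ j ∈ Finset.range n, p j ≤ ρ ^ n := by
    simpa using Finset.prod_le_prod (s := Finset.range n) (fun j _ => (hp j).1)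
      fun j _ => (hp j).2
  have hρ₀ : 0 ≤ ρ := (hp 0).1.trans (hp 0).2
  have hgeom : Tendsto (fun n : ℕ => ρ ^ n * B) atTop (nhds 0) := by
    simpa using (tendsto_pow_atTop_nhds_zero_of_lt_one hρ₀ hρ).mul_const B
  exact tendsto_of_tendsto_of_tendsto_of_le_of_le tendsto_const_nhds hgeom
    (fun n => mul_nonneg (prod_nonneg n) (hr n).1)
    fun n => mul_le_mul (prod_le n) (hr n).2 (hr n).1 (pow_nonneg hρ₀ n)

theorem hasSum_mul_prod_range {b p r : ℕ → K} {ρ B : K} (hb : ∀ n, 0 ≤ b n)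
    (hp : ∀ n, p n ∈ Set.Icc 0 ρ) (hρ : ρ < 1) (hr : ∀ n, r n ∈ Set.Icc 0 B)
    (hrec : ∀ n, r n = b n + p n * r (n + 1)) :
    HasSum (fun k => b k * ∏ j ∈ Finset.range k, p j) (r 0) := by
  refine hasSum_of_tendsto_sum_range_of_nonneg
    (fun k => mul_nonneg (hb k) (Finset.prod_nonneg fun j _ => (hp j).1)) ?_
  simp only [eq_sub_of_add_eq (sum_range_mul_prod_range_add hrec _)]
  simpa using (tendsto_prod_range_mul_zero hp hρ hr).const_sub (r 0)

theorem exists_Qs_representation_general (hq₀ : ∀ i < s, 0 ≤ q i) (hq₁ : ∀ i < s, q i < 1)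
    (hsum : 1 ≤ ∑ i ∈ Finset.range s, q i) {x : K} (hx : x ∈ Set.Icc (0 : K) 1) :
    ∃ a : ℕ → ℕ, (∀ n, a n < s) ∧
      HasSum (fun k => (∑ i ∈ Finset.range (a k), q i) * ∏ j ∈ Finset.range k, q (a j)) x := by
  obtain ⟨a, r, rfl, ha, hr, hrec⟩ := exists_digits_remainders hq₀ hsum hx
  obtain ⟨m, hm, hmax⟩ := Finset.exists_max_image (Finset.range s) q
    ⟨a 0, Finset.mem_range.mpr (ha 0)⟩
  have hβ (n : ℕ) : 0 ≤ ∑ i ∈ Finset.range (a n), q i :=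
    Finset.sum_nonneg fun i hi => hq₀ i ((Finset.mem_range.mp hi).trans (ha n))
  have hqa (n : ℕ) : q (a n) ∈ Set.Icc 0 (q m) :=
    ⟨hq₀ _ (ha n), hmax _ (Finset.mem_range.mpr (ha n))⟩
  exact ⟨a, ha, hasSum_mul_prod_range hβ hqa (hq₁ m (Finset.mem_range.mp hm)) hr hrec⟩

end OrderedField

/-- Every real number in `[0,1]` admits a `Q_s`-representation. -/
theorem exists_Qs_representation (s : ℕ) (hs : 2 ≤ s) (q : ℕ → ℝ)
    (hq : ∀ i < s, 0 < q i) (hsum : ∑ i ∈ Finset.range s, q i = 1)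
    (x : ℝ) (hx : x ∈ Set.Icc (0 : ℝ) 1) :
    ∃ a : ℕ → ℕ, (∀ n, a n < s) ∧ x = qsVal q a := by
  have hlt (i) (hi : i < s) : q i < 1 := hsum ▸ lt_sum_of_pos_of_one_lt_card
    (by rwa [Finset.card_range, Nat.lt_iff_add_one_le])
    (fun j hj => hq j (Finset.mem_range.mp hj)) (Finset.mem_range.mpr hi)
  obtain ⟨a, ha, hasSum⟩ :=
    exists_Qs_representation_general (fun i hi => (hq i hi).le) hlt hsum.ge hx
  exact ⟨a, ha, hasSum.tsum_eq.symm⟩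
end

section
/- Let c, d ∈ {0,...,s-1} with c ≠ d, and let a be the digit sequence formed by concatenating, for k = 1, 2, 3, ..., a block of 2^{k-1} copies of d followed by a block of 2^{k-1} copies of c. Then the asymptotic mean of a does not exist, i.e. the limit lim_{n→∞} (1/n) ∑_{i=0}^{n-1} a(i) does not exist. -/
open Filter

/-!
If the averages of `a` over `[0, n)` tend to `L`, then so do its averages over windows
`[n, n + m)` with `n → ∞` and `n = O(m)`: with `A n` the average over `[0, n)`, the average over the
window is `A (n + m) + (n / m) • (A (n + m) - A n)`. The blocks of copies of `d` and those of copies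
of `c` are such windows, so convergence would force `d = L = c`.
-/

open Asymptotics
open scoped Topology

section BlockAverage

variable {ι E : Type*} {l : Filter ι} {a : ℕ → E} {L : E} {n m : ι → ℕ}

theorem isBigO_natCast_of_le_mul (C : ℕ) (h : ∀ᶠ k in l, n k ≤ C * m k) :
    (fun k => (n k : ℝ)) =O[l] fun k => (m k : ℝ) := by
  refine .of_bound C (h.mono fun k hk => ?_)
  simp only [Real.norm_natCast]
  exact_mod_cast hk

theorem eventually_ne_zero_of_isBigO_natCast (hn : Tendsto n l atTop)
    (hnm : (fun k => (n k : ℝ)) =O[l] fun k => (m k : ℝ)) : ∀ᶠ k in l, m k ≠ 0 := by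
  filter_upwards [hn.eventually_ne_atTop 0, hnm.eq_zero_imp] with k hnk himp hmk
  exact hnk (mod_cast himp (mod_cast hmk))

theorem block_average_eq [AddCommGroup E] [Module ℝ E] (a : ℕ → E) (p : ℕ) {q : ℕ}
    (hq : q ≠ 0) :
    (q : ℝ)⁻¹ • ∑ i ∈ Finset.range q, a (p + i) =
      ((p + q : ℕ) : ℝ)⁻¹ • ∑ i ∈ Finset.range (p + q), a i +
        (q : ℝ)⁻¹ • (p : ℝ) • (((p + q : ℕ) : ℝ)⁻¹ • ∑ i ∈ Finset.range (p + q), a i -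
          (p : ℝ)⁻¹ • ∑ i ∈ Finset.range p, a i) := by
  rcases eq_or_ne p 0 with rfl | hp
  · simp
  have hpq : (p + q : ℝ) ≠ 0 := by positivity
  rw [Finset.sum_range_add]
  push_cast
  match_scalars <;> field_simp <;> ring

theorem tendsto_block_average [SeminormedAddCommGroup E] [NormedSpace ℝ E]
    (ha : Tendsto (fun N : ℕ => (N : ℝ)⁻¹ • ∑ i ∈ Finset.range N, a i) atTop (𝓝 L))
    (hn : Tendsto n l atTop) (hnm : (fun k => (n k : ℝ)) =O[l] fun k => (m k : ℝ)) :
    Tendsto (fun k => (m k : ℝ)⁻¹ • ∑ i ∈ Finset.range (m k), a (n k + i)) l (𝓝 L) := by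
  set A : ℕ → E := fun N => (N : ℝ)⁻¹ • ∑ i ∈ Finset.range N, a i
  have hA_end : Tendsto (fun k => A (n k + m k)) l (𝓝 L) :=
    ha.comp (tendsto_atTop_mono (fun k => Nat.le_add_right (n k) (m k)) hn)
  have hA_diff : (fun k => A (n k + m k) - A (n k)) =o[l] fun _ => (1 : ℝ) := by
    rw [isLittleO_one_iff, ← sub_self L]
    exact hA_end.sub (ha.comp hn)
  have h_correction : (fun k => (n k : ℝ) • (A (n k + m k) - A (n k))) =o[l]
      fun k => (m k : ℝ) := by
    simpa only [smul_eq_mul, mul_one] using hnm.smul_isLittleO hA_diff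
  have h_sum := hA_end.add h_correction.tendsto_inv_smul_nhds_zero
  rw [add_zero] at h_sum
  refine h_sum.congr' ?_
  filter_upwards [eventually_ne_zero_of_isBigO_natCast hn hnm] with k hmk
  exact (block_average_eq a (n k) hmk).symm

theorem eq_of_tendsto_average_of_constant_blocks [NormedAddCommGroup E] [NormedSpace ℝ E]
    [l.NeBot] {x : E}
    (ha : Tendsto (fun N : ℕ => (N : ℝ)⁻¹ • ∑ i ∈ Finset.range N, a i) atTop (𝓝 L))
    (hn : Tendsto n l atTop) (hnm : (fun k => (n k : ℝ)) =O[l] fun k => (m k : ℝ))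
    (hx : ∀ᶠ k in l, ∀ i < m k, a (n k + i) = x) : L = x := by
  refine tendsto_nhds_unique (tendsto_block_average ha hn hnm)
    (tendsto_const_nhds.congr' ?_)
  filter_upwards [hx, eventually_ne_zero_of_isBigO_natCast hn hnm] with k hxk hmk
  rw [Finset.sum_congr rfl fun i hi => hxk i (Finset.mem_range.mp hi), Finset.sum_const,
    Finset.card_range, ← Nat.cast_smul_eq_nsmul ℝ, inv_smul_smul₀ (Nat.cast_ne_zero.mpr hmk)]

end BlockAverage

theorem tendsto_two_pow_succ_sub_two_atTop :
    Tendsto (fun k : ℕ => 2 ^ (k + 1) - 2) atTop atTop :=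
  (tendsto_sub_atTop_nat 2).comp
    ((tendsto_pow_atTop_atTop_of_one_lt one_lt_two).comp (tendsto_add_atTop_nat 1))

theorem asymptoticMean_not_exists_of_doubling_blocks_general {E : Type*} [NormedAddCommGroup E]
    [NormedSpace ℝ E] {c d : E} (hcd : c ≠ d) {a : ℕ → E}
    (hblocks : ∀ k : ℕ, ∀ j < 2 ^ (k + 1),
      a (2 ^ (k + 1) - 2 + j) = if j < 2 ^ k then d else c) :
    ¬ ∃ L : E, Tendsto (fun n : ℕ => (n : ℝ)⁻¹ • ∑ i ∈ Finset.range n, a i) atTop (𝓝 L) := by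
  rintro ⟨L, hL⟩
  have hLd : L = d :=
    eq_of_tendsto_average_of_constant_blocks (m := fun k => 2 ^ k) hL
      tendsto_two_pow_succ_sub_two_atTop
      (isBigO_natCast_of_le_mul 2 (.of_forall fun k => by omega))
      (.of_forall fun k i hi => by rw [hblocks k i (by omega), if_pos hi])
  have hLc : L = c :=
    eq_of_tendsto_average_of_constant_blocks (n := fun k => 2 ^ (k + 1) - 2 + 2 ^ k)
      (m := fun k => 2 ^ k) hL
      (tendsto_atTop_mono (fun k => Nat.le_add_right _ _) tendsto_two_pow_succ_sub_two_atTop)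
      (isBigO_natCast_of_le_mul 3 (.of_forall fun k => by omega))
      (.of_forall fun k i hi => by
        rw [add_assoc, hblocks k (2 ^ k + i) (by omega), if_neg (by omega)])
  exact hcd (hLc.symm.trans hLd)

/-- Let `c ≠ d` be digits in `{0,…,s-1}` and let `a` be the digit sequence obtained by
concatenating, for `k = 1, 2, 3, …`, a block of `2^(k-1)` copies of `d` followed by a
block of `2^(k-1)` copies of `c`  (so the `k`-th double block, of length `2^k`, starts at
position `2^k - 2`; below blocks are indexed by `k - 1`).  Then the asymptotic mean of `a`
does not exist. -/
theorem asymptoticMean_not_exists_of_doubling_blocks (s : ℕ) (hs : 2 ≤ s)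
    (c d : ℕ) (hc : c < s) (hd : d < s) (hcd : c ≠ d)
    (a : ℕ → ℕ)
    (hblocks : ∀ k : ℕ, ∀ j < 2 ^ (k + 1),
      a (2 ^ (k + 1) - 2 + j) = if j < 2 ^ k then d else c) :
    ¬ ∃ L : ℝ, Filter.Tendsto (fun n => (∑ i ∈ Finset.range n, (a i : ℝ)) / n)
        Filter.atTop (nhds L) := by
  simpa only [div_eq_inv_mul, smul_eq_mul] using
    asymptoticMean_not_exists_of_doubling_blocks_general (a := fun i => (a i : ℝ))
      (Nat.cast_injective.ne hcd) fun k j hj => by rw [hblocks k j hj, Nat.cast_ite]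
end

section
/- The set S has the cardinality of the continuum. -/
open Filter

/-- The set `S` of real numbers that are `Q_s`-values of digit sequences whose
asymptotic mean of digits does not exist. -/
noncomputable def Sset (s : ℕ) (q : ℕ → ℝ) : Set ℝ :=
  {x | ∃ a : ℕ → ℕ, (∀ n, a n < s) ∧ x = qsVal q a ∧
    ¬ ∃ L : ℝ, Filter.Tendsto (fun n => (∑ i ∈ Finset.range n, (a i : ℝ)) / n)
      Filter.atTop (nhds L)}

/-!
If a sequence `f` is stretched to `f ∘ Nat.log b`, which is constant on the blocks
`[b ^ k, b ^ (k + 1))`, the value `f k` is a fixed affine combination of the means at `b ^ k` and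
`b ^ (k + 1)`, so the means can only converge if `f` does. Stretching the binary sequences
`x 0, ¬ x 0, x 1, ¬ x 1, …`, none of which converges, thus gives continuum many digit sequences
without a mean. Each of them contains infinitely many zeros, and on the sequences over `{0, 1}` with
this property the value is strictly increasing for the lexicographic order.
-/

open Finset Topology

section Value

variable {s : ℕ} {q : ℕ → ℝ} {a b : ℕ → ℕ}

/-- The `k`-th summand `β_{a k} · q_{a 0} ⋯ q_{a (k - 1)}` of the series defining `qsVal q a`. -/
noncomputable def qsTerm (q : ℕ → ℝ) (a : ℕ → ℕ) (k : ℕ) : ℝ :=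
  (∑ i ∈ range (a k), q i) * ∏ j ∈ range k, q (a j)

/-- The digit sequences over `{0, …, s - 1}` that are not eventually equal to `s - 1`; restricting
to them removes the ambiguity of `Q_s`-expansions. -/
def reducedDigitSeqs (s : ℕ) : Set (ℕ → ℕ) :=
  {a | (∀ n, a n < s) ∧ ∃ᶠ n in atTop, a n + 1 < s}

lemma sum_range_le_sum_range {m n : ℕ} (hq : ∀ i < n, 0 ≤ q i) (hmn : m ≤ n) :
    ∑ i ∈ range m, q i ≤ ∑ i ∈ range n, q i :=
  sum_le_sum_of_subset_of_nonneg (range_subset_range.2 hmn) fun i hi _ => hq i (mem_range.1 hi)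

lemma qsTerm_nonneg (hq : ∀ i < s, 0 ≤ q i) (ha : ∀ n, a n < s) (k : ℕ) : 0 ≤ qsTerm q a k :=
  mul_nonneg (sum_nonneg fun i hi => hq i ((mem_range.1 hi).trans (ha k)))
    (prod_nonneg fun j _ => hq _ (ha j))

lemma sum_qsTerm_succ_add_prod (q : ℕ → ℝ) (a : ℕ → ℕ) (n : ℕ) :
    ∑ k ∈ range (n + 1), qsTerm q a k + ∏ j ∈ range (n + 1), q (a j) =
      ∑ k ∈ range n, qsTerm q a k +
        (∑ i ∈ range (a n + 1), q i) * ∏ j ∈ range n, q (a j) := by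
  rw [sum_range_succ, prod_range_succ, sum_range_succ q, qsTerm]
  ring

lemma sum_qsTerm_add_prod_le_one (hq : ∀ i < s, 0 ≤ q i) (hsum : ∑ i ∈ range s, q i ≤ 1)
    (ha : ∀ n, a n < s) (n : ℕ) :
    ∑ k ∈ range n, qsTerm q a k + ∏ j ∈ range n, q (a j) ≤ 1 := by
  induction n with
  | zero => simp
  | succ n ih =>
    have hβ : ∑ i ∈ range (a n + 1), q i ≤ 1 :=
      (sum_range_le_sum_range hq (ha n)).trans hsum
    have hprod : 0 ≤ ∏ j ∈ range n, q (a j) := prod_nonneg fun j _ => hq _ (ha j)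
    rw [sum_qsTerm_succ_add_prod]
    linarith [mul_le_of_le_one_left hprod hβ]

lemma sum_qsTerm_le_one (hq : ∀ i < s, 0 ≤ q i) (hsum : ∑ i ∈ range s, q i ≤ 1)
    (ha : ∀ n, a n < s) (n : ℕ) : ∑ k ∈ range n, qsTerm q a k ≤ 1 :=
  le_of_add_le_of_nonneg_left (sum_qsTerm_add_prod_le_one hq hsum ha n)
    (prod_nonneg fun j _ => hq _ (ha j))

lemma summable_qsTerm (hq : ∀ i < s, 0 ≤ q i) (hsum : ∑ i ∈ range s, q i ≤ 1)
    (ha : ∀ n, a n < s) : Summable (qsTerm q a) :=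
  summable_of_sum_range_le (qsTerm_nonneg hq ha) (sum_qsTerm_le_one hq hsum ha)

lemma qsVal_nonneg (hq : ∀ i < s, 0 ≤ q i) (ha : ∀ n, a n < s) : 0 ≤ qsVal q a :=
  tsum_nonneg (qsTerm_nonneg hq ha)

lemma qsVal_le_one (hq : ∀ i < s, 0 ≤ q i) (hsum : ∑ i ∈ range s, q i ≤ 1)
    (ha : ∀ n, a n < s) : qsVal q a ≤ 1 :=
  Real.tsum_le_of_sum_range_le (qsTerm_nonneg hq ha) (sum_qsTerm_le_one hq hsum ha)

lemma qsTerm_add (q : ℕ → ℝ) (a : ℕ → ℕ) (k n : ℕ) :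
    qsTerm q a (k + n) = (∏ j ∈ range n, q (a j)) * qsTerm q (fun m => a (m + n)) k := by
  rw [qsTerm, qsTerm, add_comm k n, prod_range_add]
  simp only [add_comm n]
  ring

lemma qsVal_eq_sum_add_prod_mul (hq : ∀ i < s, 0 ≤ q i) (hsum : ∑ i ∈ range s, q i ≤ 1)
    (ha : ∀ n, a n < s) (n : ℕ) :
    qsVal q a = ∑ k ∈ range n, qsTerm q a k +
      (∏ j ∈ range n, q (a j)) * qsVal q (fun m => a (m + n)) := calc
  qsVal q a = ∑ k ∈ range n, qsTerm q a k + ∑' k, qsTerm q a (k + n) :=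
    ((summable_qsTerm hq hsum ha).sum_add_tsum_nat_add n).symm
  _ = _ := by simp only [qsTerm_add, tsum_mul_left]; rfl

lemma qsVal_lt_one (hq : ∀ i < s, 0 < q i) (hsum : ∑ i ∈ range s, q i ≤ 1)
    (ha : ∀ n, a n < s) (hlast : ∃ n, a n + 1 < s) : qsVal q a < 1 := by
  obtain ⟨n, hn⟩ := hlast
  have hq' : ∀ i < s, 0 ≤ q i := fun i hi => (hq i hi).le
  have hprod : ∀ m, 0 < ∏ j ∈ range m, q (a j) := fun m => prod_pos fun j _ => hq _ (ha j)
  have hβ : ∑ i ∈ range (a n + 1), q i < 1 := calc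
    _ < ∑ i ∈ range (a n + 1 + 1), q i := by
      rw [sum_range_succ _ (a n + 1)]
      exact lt_add_of_pos_right _ (hq _ hn)
    _ ≤ ∑ i ∈ range s, q i := sum_range_le_sum_range hq' hn
    _ ≤ 1 := hsum
  calc qsVal q a
    _ = ∑ k ∈ range (n + 1), qsTerm q a k +
          (∏ j ∈ range (n + 1), q (a j)) * qsVal q (fun m => a (m + (n + 1))) :=
      qsVal_eq_sum_add_prod_mul hq' hsum ha (n + 1)
    _ ≤ ∑ k ∈ range (n + 1), qsTerm q a k + ∏ j ∈ range (n + 1), q (a j) := by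
      gcongr
      exact mul_le_of_le_one_right (hprod _).le (qsVal_le_one hq' hsum fun _ => ha _)
    _ = ∑ k ∈ range n, qsTerm q a k +
          (∑ i ∈ range (a n + 1), q i) * ∏ j ∈ range n, q (a j) :=
      sum_qsTerm_succ_add_prod q a n
    _ < ∑ k ∈ range n, qsTerm q a k + ∏ j ∈ range n, q (a j) := by
      gcongr
      exact mul_lt_of_lt_one_left (hprod n) hβ
    _ ≤ 1 := sum_qsTerm_add_prod_le_one hq' hsum ha n

lemma qsVal_lt_qsVal_of_head_lt (hq : ∀ i < s, 0 < q i) (hsum : ∑ i ∈ range s, q i ≤ 1)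
    (ha : ∀ n, a n < s) (hb : ∀ n, b n < s) (hlast : ∃ n, a (n + 1) + 1 < s)
    (hhead : a 0 < b 0) : qsVal q a < qsVal q b := by
  have hq' : ∀ i < s, 0 ≤ q i := fun i hi => (hq i hi).le
  have qsVal_cons : ∀ {c : ℕ → ℕ}, (∀ n, c n < s) →
      qsVal q c = ∑ i ∈ range (c 0), q i + q (c 0) * qsVal q (fun n => c (n + 1)) := by
    intro c hc
    simpa [qsTerm] using qsVal_eq_sum_add_prod_mul hq' hsum hc 1
  calc qsVal q a
    _ = ∑ i ∈ range (a 0), q i + q (a 0) * qsVal q (fun n => a (n + 1)) := qsVal_cons ha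
    _ < ∑ i ∈ range (a 0), q i + q (a 0) := by
      gcongr
      exact mul_lt_of_lt_one_right (hq _ (ha 0)) (qsVal_lt_one hq hsum (fun _ => ha _) hlast)
    _ = ∑ i ∈ range (a 0 + 1), q i := (sum_range_succ _ _).symm
    _ ≤ ∑ i ∈ range (b 0), q i :=
      sum_range_le_sum_range (fun i hi => hq' i (hi.trans (hb 0))) hhead
    _ ≤ ∑ i ∈ range (b 0), q i + q (b 0) * qsVal q (fun n => b (n + 1)) :=
      le_add_of_nonneg_right (mul_nonneg (hq' _ (hb 0)) (qsVal_nonneg hq' fun _ => hb _))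
    _ = qsVal q b := (qsVal_cons hb).symm

lemma qsTerm_congr {n : ℕ} (hprefix : ∀ k ≤ n, a k = b k) : qsTerm q a n = qsTerm q b n := by
  have hprod : ∏ j ∈ range n, q (a j) = ∏ j ∈ range n, q (b j) :=
    prod_congr rfl fun j hj => by rw [hprefix j (mem_range.1 hj).le]
  rw [qsTerm, qsTerm, hprefix n le_rfl, hprod]

lemma qsVal_lt_qsVal_of_prefix_eq (hq : ∀ i < s, 0 < q i) (hsum : ∑ i ∈ range s, q i ≤ 1)
    (ha : ∀ n, a n < s) (hb : ∀ n, b n < s) {n : ℕ} (hlast : ∃ m > n, a m + 1 < s)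
    (hprefix : ∀ k < n, a k = b k) (hn : a n < b n) : qsVal q a < qsVal q b := by
  have hq' : ∀ i < s, 0 ≤ q i := fun i hi => (hq i hi).le
  have htail : qsVal q (fun m => a (m + n)) < qsVal q (fun m => b (m + n)) := by
    refine qsVal_lt_qsVal_of_head_lt hq hsum (fun _ => ha _) (fun _ => hb _) ?_
      (by simpa only [zero_add] using hn)
    obtain ⟨m, hnm, hm⟩ := hlast
    exact ⟨m - (n + 1), by rwa [add_assoc, add_comm 1 n, Nat.sub_add_cancel hnm]⟩
  have hprod : ∏ j ∈ range n, q (a j) = ∏ j ∈ range n, q (b j) :=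
    prod_congr rfl fun j hj => by rw [hprefix j (mem_range.1 hj)]
  have hterm : ∑ k ∈ range n, qsTerm q a k = ∑ k ∈ range n, qsTerm q b k :=
    sum_congr rfl fun k hk => qsTerm_congr fun j hj => hprefix j (hj.trans_lt (mem_range.1 hk))
  rw [qsVal_eq_sum_add_prod_mul hq' hsum ha n, qsVal_eq_sum_add_prod_mul hq' hsum hb n,
    hterm, hprod]
  gcongr
  exact prod_pos fun j _ => hq _ (hb j)

theorem strictMonoOn_qsVal_ofLex (hq : ∀ i < s, 0 < q i) (hsum : ∑ i ∈ range s, q i ≤ 1) :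
    StrictMonoOn (fun a : Lex (ℕ → ℕ) => qsVal q (ofLex a)) (ofLex ⁻¹' reducedDigitSeqs s) := by
  rintro a ⟨ha, ha_last⟩ b ⟨hb, -⟩ ⟨n, hprefix, hn⟩
  exact qsVal_lt_qsVal_of_prefix_eq hq hsum ha hb (frequently_atTop.1 ha_last (n + 1)) hprefix hn

theorem injOn_qsVal (hq : ∀ i < s, 0 < q i) (hsum : ∑ i ∈ range s, q i ≤ 1) :
    Set.InjOn (qsVal q) (reducedDigitSeqs s) :=
  (strictMonoOn_qsVal_ofLex hq hsum).injOn

end Value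

lemma sum_range_pow_succ_comp_log {M : Type*} [AddCommMonoid M] (f : ℕ → M) {b : ℕ} (hb : 1 < b)
    (k : ℕ) :
    ∑ i ∈ range (b ^ (k + 1)), f (Nat.log b i) =
      ∑ i ∈ range (b ^ k), f (Nat.log b i) + (b ^ (k + 1) - b ^ k) • f k := by
  have hlog : ∀ i ∈ Ico (b ^ k) (b ^ (k + 1)), f (Nat.log b i) = f k := fun i hi => by
    rw [Nat.log_eq_of_pow_le_of_lt_pow (mem_Ico.1 hi).1 (mem_Ico.1 hi).2]
  rw [← sum_range_add_sum_Ico _ (Nat.pow_le_pow_right hb.le k.le_succ), sum_congr rfl hlog,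
    sum_const, Nat.card_Ico]

theorem tendsto_of_tendsto_mean_comp_log {f : ℕ → ℝ} {b : ℕ} (hb : 1 < b) {L : ℝ}
    (h : Tendsto (fun n : ℕ => (∑ i ∈ range n, f (Nat.log b i)) / n) atTop (𝓝 L)) :
    Tendsto f atTop (𝓝 L) := by
  set mean : ℕ → ℝ := fun n => (∑ i ∈ range n, f (Nat.log b i)) / n with hmean
  have hb' : (1 : ℝ) < b := by exact_mod_cast hb
  have hb_sub : (b : ℝ) - 1 ≠ 0 := (sub_pos.2 hb').ne'
  have hf : ∀ k, (b * mean (b ^ (k + 1)) - mean (b ^ k)) / (b - 1) = f k := by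
    intro k
    have hle : b ^ k ≤ b ^ (k + 1) := Nat.pow_le_pow_right hb.le k.le_succ
    simp only [hmean, sum_range_pow_succ_comp_log f hb, nsmul_eq_mul, Nat.cast_sub hle,
      Nat.cast_pow]
    field_simp
    ring
  have hpow : Tendsto (fun k => mean (b ^ k)) atTop (𝓝 L) :=
    h.comp (tendsto_pow_atTop_atTop_of_one_lt hb)
  have hlim := (((hpow.comp (tendsto_add_atTop_nat 1)).const_mul (b : ℝ)).sub hpow).div_const
    ((b : ℝ) - 1)
  have hL : (b * L - L) / (b - 1) = L := by field_simp
  rw [hL] at hlim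
  exact hlim.congr hf

lemma qsVal_comp_log_mem_Sset {s : ℕ} (q : ℕ → ℝ) {c : ℕ → ℕ} (hc : ∀ n, c n < s)
    (hdiv : ¬ ∃ L : ℝ, Tendsto (fun n => (c n : ℝ)) atTop (𝓝 L)) :
    qsVal q (c ∘ Nat.log 2) ∈ Sset s q :=
  ⟨c ∘ Nat.log 2, fun _ => hc _, rfl, fun ⟨L, hL⟩ =>
    hdiv ⟨L, tendsto_of_tendsto_mean_comp_log (f := fun n => (c n : ℝ)) one_lt_two hL⟩⟩

/-- The binary digit sequence `x 0, ¬ x 0, x 1, ¬ x 1, …`, an injective coding of `x` that takes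
both digits infinitely often. -/
def complementPairs (x : ℕ → Bool) (n : ℕ) : ℕ :=
  if Even n then (x (n / 2)).toNat else (!x (n / 2)).toNat

namespace complementPairs

lemma apply_two_mul (x : ℕ → Bool) (n : ℕ) : complementPairs x (2 * n) = (x n).toNat := by
  simp [complementPairs]

lemma apply_two_mul_add_one (x : ℕ → Bool) (n : ℕ) :
    complementPairs x (2 * n + 1) = (!x n).toNat := by
  simp [complementPairs, Nat.mul_add_div]

lemma lt_two (x : ℕ → Bool) (n : ℕ) : complementPairs x n < 2 := by
  unfold complementPairs
  split_ifs <;> exact Bool.toNat_lt _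

lemma injective : Function.Injective complementPairs := by
  intro x y hxy
  funext n
  have htoNat : (x n).toNat = (y n).toNat := by
    simpa only [apply_two_mul] using congrFun hxy (2 * n)
  grind [Bool.toNat]

lemma frequently_eq_toNat (x : ℕ → Bool) (d : Bool) :
    ∃ᶠ n in atTop, complementPairs x n = d.toNat := by
  refine frequently_atTop.2 fun N => ?_
  by_cases hd : x N = d
  · exact ⟨2 * N, by lia, by rw [apply_two_mul, hd]⟩
  · exact ⟨2 * N + 1, by lia, by rw [apply_two_mul_add_one, Bool.not_eq.2 hd]⟩

lemma not_tendsto (x : ℕ → Bool) :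
    ¬ ∃ L : ℝ, Tendsto (fun n => (complementPairs x n : ℝ)) atTop (𝓝 L) := by
  rintro ⟨L, hL⟩
  have eq_limit : ∀ d : Bool, L = d.toNat := fun d =>
    isClosed_singleton.mem_of_frequently_of_tendsto
      ((frequently_eq_toNat x d).mono fun _ hn => congrArg Nat.cast hn) hL
  simpa using (eq_limit true).symm.trans (eq_limit false)

lemma comp_log_mem_reducedDigitSeqs (x : ℕ → Bool) :
    complementPairs x ∘ Nat.log 2 ∈ reducedDigitSeqs 2 := by
  refine ⟨fun _ => lt_two x _, ?_⟩
  refine (tendsto_pow_atTop_atTop_of_one_lt one_lt_two).frequently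
    ((frequently_eq_toNat x false).mono fun k hk => ?_)
  simp [Nat.log_pow one_lt_two, hk]

lemma comp_log_injective : Function.Injective fun x => complementPairs x ∘ Nat.log 2 := by
  have log_surjective : Function.Surjective (Nat.log 2) :=
    fun k => ⟨2 ^ k, Nat.log_pow one_lt_two k⟩
  exact log_surjective.injective_comp_right.comp injective

end complementPairs

theorem Sset_cardinality_continuum_general {s : ℕ} (hs : 2 ≤ s) {q : ℕ → ℝ} (hq₀ : 0 < q 0)
    (hq₁ : 0 < q 1) (hsum : q 0 + q 1 ≤ 1) : Cardinal.mk (Sset s q) = Cardinal.continuum := by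
  apply le_antisymm
  · exact (Cardinal.mk_set_le _).trans_eq Cardinal.mk_real
  · have hinj : Set.InjOn (qsVal q) (reducedDigitSeqs 2) :=
      injOn_qsVal (fun i hi => by interval_cases i <;> assumption)
        (by simpa [sum_range_succ] using hsum)
    let value (x : ℕ → Bool) : Sset s q :=
      ⟨qsVal q (complementPairs x ∘ Nat.log 2), qsVal_comp_log_mem_Sset q
        (fun n => (complementPairs.lt_two x n).trans_le hs) (complementPairs.not_tendsto x)⟩
    have value_injective : Function.Injective value := fun x y hxy =>
      complementPairs.comp_log_injective <|
        hinj (complementPairs.comp_log_mem_reducedDigitSeqs x)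
          (complementPairs.comp_log_mem_reducedDigitSeqs y) (congrArg Subtype.val hxy)
    calc Cardinal.continuum
      _ = Cardinal.mk (ℕ → Bool) := by simp
      _ ≤ Cardinal.mk (Sset s q) := Cardinal.mk_le_of_injective value_injective

/-- The set `S` has the cardinality of the continuum. -/
theorem Sset_cardinality_continuum (s : ℕ) (hs : 2 ≤ s) (q : ℕ → ℝ)
    (hq : ∀ i < s, 0 < q i) (hsum : ∑ i ∈ Finset.range s, q i = 1) :
    Cardinal.mk (Sset s q) = Cardinal.continuum :=
  Sset_cardinality_continuum_general hs (hq 0 (by lia)) (hq 1 (by lia)) <| by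
    simpa [sum_range_succ, hsum] using sum_range_le_sum_range (fun i hi => (hq i hi).le) hs
end

section
/- The set S is dense in the interval [0,1]. -/
open Filter

/-!
Prepending the digit `d` to a digit sequence acts on values as the affine contraction
`y ↦ β_d + q_d y`. These `s` contractions map `S` into itself, because one extra digit does not
affect the asymptotic mean, while the images of `[0,1)` under them cover `[0,1)`. Hence the
supremum `M` over `[0,1)` of the distance to `S` satisfies `M ≤ r M` with `r = max q_d < 1`, so
`M = 0`. It remains to exhibit one element of `S`: digits that alternate between `0` and `1` on
consecutive blocks `[2^k, 2^(k+1))` have no asymptotic mean.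
-/

open Set Topology
open scoped NNReal ENNReal

lemma infEDist_image_le_of_lipschitzWith {α β : Type*} [PseudoEMetricSpace α]
    [PseudoEMetricSpace β] {K : ℝ≥0} {f : α → β} (hf : LipschitzWith K f) (x : α) {S : Set α}
    (hS : S.Nonempty) : Metric.infEDist (f x) (f '' S) ≤ K * Metric.infEDist x S := by
  have := hS.to_subtype
  simp only [Metric.infEDist, iInf_image, iInf_subtype']
  rw [ENNReal.mul_iInf fun hK => absurd hK ENNReal.coe_ne_top]
  exact iInf_mono fun y => hf x y

theorem subset_closure_of_contractingWith {ι α : Type*} [Finite ι] [MetricSpace α]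
    {f : ι → α → α} {K : ι → ℝ≥0} (hf : ∀ i, ContractingWith (K i) (f i)) {X S : Set α}
    (hX : Bornology.IsBounded X) (hcover : X ⊆ ⋃ i, f i '' X) (hS : S.Nonempty)
    (hmaps : ∀ i, MapsTo (f i) S S) : X ⊆ closure S := by
  have := Fintype.ofFinite ι
  set r : ℝ≥0 := Finset.univ.sup K
  have hr : r < 1 := (Finset.sup_lt_iff zero_lt_one).2 fun i _ => (hf i).1
  set M : ℝ≥0∞ := ⨆ x ∈ X, Metric.infEDist x S
  have hMfin : M ≠ ⊤ := by
    obtain ⟨y, hy⟩ := hS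
    refine ne_top_of_le_ne_top (hX.insert y).ediam_ne_top (iSup₂_le fun x hx => ?_)
    exact (Metric.infEDist_le_edist_of_mem hy).trans
      (Metric.edist_le_ediam_of_mem (mem_insert_of_mem y hx) (mem_insert y X))
  have hcontract (i : ι) (x : α) : Metric.infEDist (f i x) S ≤ r * Metric.infEDist x S := by
    calc Metric.infEDist (f i x) S ≤ Metric.infEDist (f i x) (f i '' S) :=
          Metric.infEDist_anti (hmaps i).image_subset
      _ ≤ K i * Metric.infEDist x S := infEDist_image_le_of_lipschitzWith (hf i).2 x hS
      _ ≤ r * Metric.infEDist x S := by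
          gcongr
          exact Finset.le_sup (Finset.mem_univ i)
  have hMle : M ≤ r * M := by
    refine iSup₂_le fun x hx => ?_
    obtain ⟨i, z, hz, rfl⟩ := mem_iUnion.1 (hcover hx)
    exact (hcontract i z).trans
      (by gcongr; exact le_iSup₂ (f := fun x _ => Metric.infEDist x S) z hz)
  have hM : M = 0 := by
    by_contra hM
    refine hMle.not_gt ?_
    simpa using ENNReal.mul_lt_mul_left hM hMfin (ENNReal.coe_lt_one_iff.2 hr)
  intro x hx
  rw [Metric.mem_closure_iff_infEDist_zero]
  exact le_zero_iff.1 ((le_iSup₂_of_le x hx le_rfl).trans hM.le)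

/-- The sequence `u` has asymptotic mean `L`: its averages `(u 0 + ⋯ + u (n - 1)) / n` tend
to `L`. -/
def HasAsymptoticMean (u : ℕ → ℝ) (L : ℝ) : Prop :=
  Tendsto (fun n : ℕ => (∑ i ∈ Finset.range n, u i) / n) atTop (𝓝 L)

namespace HasAsymptoticMean

variable {u : ℕ → ℝ} {L : ℝ}

lemma tail (h : HasAsymptoticMean u L) : HasAsymptoticMean (fun n => u (n + 1)) L := by
  have hratio : Tendsto (fun n : ℕ => 1 + 1 / (n : ℝ)) atTop (𝓝 1) := by
    simpa using tendsto_one_div_atTop_nhds_zero_nat.const_add (1 : ℝ)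
  have hlim := ((h.comp (tendsto_add_atTop_nat 1)).mul hratio).sub
    (tendsto_const_div_atTop_nhds_zero_nat (u 0))
  rw [mul_one, sub_zero] at hlim
  refine hlim.congr' ?_
  filter_upwards [eventually_gt_atTop 0] with n hn
  simp only [Function.comp_apply, Finset.sum_range_succ', Nat.cast_add, Nat.cast_one]
  field_simp
  ring

lemma tendsto_sum_Ico_pow (h : HasAsymptoticMean u L) {b : ℕ} (hb : 1 < b) :
    Tendsto (fun k : ℕ => (∑ i ∈ Finset.Ico (b ^ k) (b ^ (k + 1)), u i) / (b : ℝ) ^ k) atTop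
      (𝓝 ((b - 1) * L)) := by
  have hpow := h.comp (tendsto_pow_atTop_atTop_of_one_lt hb)
  have hlim := ((hpow.comp (tendsto_add_atTop_nat 1)).const_mul (b : ℝ)).sub hpow
  rw [sub_one_mul]
  refine hlim.congr fun k => ?_
  have hb0 : (b : ℝ) ≠ 0 := by positivity
  rw [Finset.sum_Ico_eq_sub _ (Nat.pow_le_pow_right hb.le k.le_succ)]
  simp only [Function.comp_apply, Nat.cast_pow]
  rw [pow_succ (b : ℝ)]
  field_simp

lemma tendsto_of_comp_log {b : ℕ} (hb : 1 < b) {v : ℕ → ℝ}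
    (h : HasAsymptoticMean (fun i => v (Nat.log b i)) L) : Tendsto v atTop (𝓝 L) := by
  have hb1 : (b : ℝ) - 1 ≠ 0 := sub_ne_zero.2 (by exact_mod_cast hb.ne')
  have hblock (k : ℕ) : ∑ i ∈ Finset.Ico (b ^ k) (b ^ (k + 1)), v (Nat.log b i)
      = (b - 1) * b ^ k * v k := by
    have hconst : ∀ i ∈ Finset.Ico (b ^ k) (b ^ (k + 1)), v (Nat.log b i) = v k := by
      intro i hi
      obtain ⟨hki, hik⟩ := Finset.mem_Ico.1 hi
      rw [Nat.log_eq_of_pow_le_of_lt_pow hki hik]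
    rw [Finset.sum_congr rfl hconst, Finset.sum_const, Nat.card_Ico, nsmul_eq_mul,
      Nat.cast_sub (Nat.pow_le_pow_right hb.le k.le_succ)]
    push_cast
    rw [Nat.succ_eq_add_one, pow_succ]
    ring
  have hlim := (h.tendsto_sum_Ico_pow hb).div_const ((b : ℝ) - 1)
  rw [mul_div_cancel_left₀ L hb1] at hlim
  refine hlim.congr fun k => ?_
  rw [hblock]
  field_simp

end HasAsymptoticMean

lemma not_hasAsymptoticMean_log_mod_two (L : ℝ) :
    ¬ HasAsymptoticMean (fun i => ((Nat.log 2 i % 2 : ℕ) : ℝ)) L := by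
  intro h
  have hv : Tendsto (fun k : ℕ => ((k % 2 : ℕ) : ℝ)) atTop (𝓝 L) :=
    HasAsymptoticMean.tendsto_of_comp_log one_lt_two h
  have hzero : L ∈ ({0} : Set ℝ) := isClosed_singleton.mem_of_frequently_of_tendsto
    (Nat.frequently_even.mono fun k hk => by simp [Nat.even_iff.1 hk]) hv
  have hone : L ∈ ({1} : Set ℝ) := isClosed_singleton.mem_of_frequently_of_tendsto
    (Nat.frequently_odd.mono fun k hk => by simp [Nat.odd_iff.1 hk]) hv
  exact zero_ne_one (hzero.symm.trans hone)

/-- The map `y ↦ β_d + q_d y`, which sends the `Q_s`-value of a digit sequence to the value of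
the sequence with the digit `d` prepended. -/
def digitMap (q : ℕ → ℝ) (d : ℕ) (y : ℝ) : ℝ :=
  ∑ i ∈ Finset.range d, q i + q d * y

lemma contractingWith_digitMap {q : ℕ → ℝ} {d : ℕ} (hd : ‖q d‖₊ < 1) :
    ContractingWith ‖q d‖₊ (digitMap q d) := by
  refine ⟨hd, LipschitzWith.of_dist_le_mul fun x y => ?_⟩
  simp only [digitMap, dist_add_left, Real.dist_eq, ← mul_sub, abs_mul, coe_nnnorm,
    Real.norm_eq_abs, le_refl]

lemma Ico_subset_iUnion_digitMap_image_Ico (q : ℕ → ℝ) (s : ℕ) :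
    Ico 0 (∑ i ∈ Finset.range s, q i) ⊆ ⋃ d : Fin s, digitMap q d '' Ico 0 1 := by
  intro x hx
  rw [← Finset.sum_range_zero q] at hx
  obtain ⟨d, hd, hdx, hxd⟩ := mem_iUnion₂.1
    (Ico_subset_biUnion_Ico s (fun m => ∑ i ∈ Finset.range m, q i) hx)
  rw [Finset.sum_range_succ] at hxd
  have hqd : 0 < q d := by linarith
  refine mem_iUnion.2 ⟨⟨d, Finset.mem_range.1 hd⟩, (x - ∑ i ∈ Finset.range d, q i) / q d,
    ⟨div_nonneg (sub_nonneg.2 hdx) hqd.le, (div_lt_one hqd).2 (by linarith)⟩, ?_⟩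
  rw [digitMap, mul_div_cancel₀ _ hqd.ne', add_sub_cancel]

section Values

variable {s : ℕ} {q : ℕ → ℝ} {a : ℕ → ℕ}

lemma sum_range_qsVal_add_prod_le_one (hq : ∀ i < s, 0 ≤ q i)
    (hsum : ∑ i ∈ Finset.range s, q i ≤ 1) (ha : ∀ n, a n < s) (n : ℕ) :
    ∑ k ∈ Finset.range n, (∑ i ∈ Finset.range (a k), q i) * ∏ j ∈ Finset.range k, q (a j)
      + ∏ j ∈ Finset.range n, q (a j) ≤ 1 := by
  induction n with
  | zero => simp
  | succ n ih =>
    have hdigit : ∑ i ∈ Finset.range (a n), q i + q (a n) ≤ 1 := by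
      rw [← Finset.sum_range_succ]
      exact (Finset.sum_le_sum_of_subset_of_nonneg (Finset.range_mono (ha n))
        fun i hi _ => hq i (Finset.mem_range.1 hi)).trans hsum
    have hprod : 0 ≤ ∏ j ∈ Finset.range n, q (a j) :=
      Finset.prod_nonneg fun j _ => hq _ (ha j)
    rw [Finset.sum_range_succ, Finset.prod_range_succ]
    linarith [mul_le_of_le_one_left hprod hdigit]

lemma summable_qsVal (hq : ∀ i < s, 0 ≤ q i) (hsum : ∑ i ∈ Finset.range s, q i ≤ 1)
    (ha : ∀ n, a n < s) :
    Summable fun k => (∑ i ∈ Finset.range (a k), q i) * ∏ j ∈ Finset.range k, q (a j) := by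
  have hprod (n : ℕ) : 0 ≤ ∏ j ∈ Finset.range n, q (a j) :=
    Finset.prod_nonneg fun j _ => hq _ (ha j)
  have hbase (k : ℕ) : 0 ≤ ∑ i ∈ Finset.range (a k), q i :=
    Finset.sum_nonneg fun i hi => hq i ((Finset.mem_range.1 hi).trans (ha k))
  exact summable_of_sum_range_le (fun k => mul_nonneg (hbase k) (hprod k)) fun n =>
    (le_add_of_nonneg_right (hprod n)).trans (sum_range_qsVal_add_prod_le_one hq hsum ha n)

lemma qsVal_eq_digitMap_tail (ha : Summable fun k =>
      (∑ i ∈ Finset.range (a k), q i) * ∏ j ∈ Finset.range k, q (a j)) :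
    qsVal q a = digitMap q (a 0) (qsVal q fun n => a (n + 1)) := by
  rw [qsVal, ha.tsum_eq_zero_add, digitMap, qsVal, ← tsum_mul_left]
  simp only [Finset.prod_range_zero, mul_one, Finset.prod_range_succ', mul_left_comm,
    mul_comm]

theorem Icc_subset_closure_image_qsVal {A : Set (ℕ → ℕ)} (hq0 : ∀ i < s, 0 ≤ q i)
    (hq1 : ∀ i < s, q i < 1) (hsum : ∑ i ∈ Finset.range s, q i = 1) (hA : A.Nonempty)
    (hdigits : ∀ a ∈ A, ∀ n, a n < s)
    (hprepend : ∀ a : ℕ → ℕ, a 0 < s → (fun n => a (n + 1)) ∈ A → a ∈ A) :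
    Icc 0 1 ⊆ closure (qsVal q '' A) := by
  have hcontract (d : Fin s) : ContractingWith ‖q d‖₊ (digitMap q d) := by
    refine contractingWith_digitMap ?_
    rw [← NNReal.coe_lt_coe, coe_nnnorm, Real.norm_of_nonneg (hq0 d d.2)]
    exact hq1 d d.2
  have hmaps (d : Fin s) : MapsTo (digitMap q d) (qsVal q '' A) (qsVal q '' A) := by
    rintro _ ⟨a, ha, rfl⟩
    let b : ℕ → ℕ := fun n => Nat.casesOn n d a
    have hb : b ∈ A := hprepend b d.2 ha
    exact ⟨b, hb, qsVal_eq_digitMap_tail (summable_qsVal hq0 hsum.le (hdigits b hb))⟩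
  rw [← closure_Ico zero_ne_one]
  refine closure_minimal ?_ isClosed_closure
  refine subset_closure_of_contractingWith hcontract (Metric.isBounded_Ico 0 1) ?_
    (hA.image _) hmaps
  simpa only [hsum] using Ico_subset_iUnion_digitMap_image_Ico q s

end Values

lemma lt_one_of_sum_range_eq_one {s : ℕ} {q : ℕ → ℝ} (hs : 2 ≤ s) (hq : ∀ i < s, 0 < q i)
    (hsum : ∑ i ∈ Finset.range s, q i = 1) {i : ℕ} (hi : i < s) : q i < 1 := by
  obtain ⟨j, hj, hji⟩ := (Finset.range s).exists_mem_ne (by rwa [Finset.card_range]) i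
  rw [← hsum]
  exact Finset.single_lt_sum hji (Finset.mem_range.2 hi) hj (hq j (Finset.mem_range.1 hj))
    fun k hk _ => (hq k (Finset.mem_range.1 hk)).le

theorem Sset_dense_in_Icc_general (s : ℕ) (q : ℕ → ℝ) (hq0 : ∀ i < s, 0 ≤ q i)
    (hq1 : ∀ i < s, q i < 1) (hsum : ∑ i ∈ Finset.range s, q i = 1) :
    Icc (0 : ℝ) 1 ⊆ closure (Sset s q) := by
  have hs : 2 ≤ s := by
    by_contra! hs
    interval_cases s
    · simp at hsum
    · exact (hq1 0 one_pos).ne (by simpa using hsum)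
  set A : Set (ℕ → ℕ) :=
    {a | (∀ n, a n < s) ∧ ¬ ∃ L, HasAsymptoticMean (fun n => (a n : ℝ)) L}
  have hA : A.Nonempty := ⟨fun i => Nat.log 2 i % 2,
    fun _ => (Nat.mod_lt _ two_pos).trans_le hs,
    fun ⟨L, h⟩ => not_hasAsymptoticMean_log_mod_two L h⟩
  have hprepend (a : ℕ → ℕ) (h0 : a 0 < s) (ha : (fun n => a (n + 1)) ∈ A) : a ∈ A :=
    ⟨fun n => n.casesOn h0 ha.1, fun ⟨L, h⟩ => ha.2 ⟨L, h.tail⟩⟩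
  have hAS : qsVal q '' A ⊆ Sset s q := by
    rintro _ ⟨a, ⟨ha, hmean⟩, rfl⟩
    exact ⟨a, ha, rfl, hmean⟩
  exact (Icc_subset_closure_image_qsVal hq0 hq1 hsum hA (fun _ ha => ha.1) hprepend).trans
    (closure_mono hAS)

/-- The set `S` is dense in the interval `[0,1]`. -/
theorem Sset_dense_in_Icc (s : ℕ) (hs : 2 ≤ s) (q : ℕ → ℝ)
    (hq : ∀ i < s, 0 < q i) (hsum : ∑ i ∈ Finset.range s, q i = 1) :
    Set.Icc (0 : ℝ) 1 ⊆ closure (Sset s q) := by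
  exact Sset_dense_in_Icc_general s q (fun i hi => (hq i hi).le)
    (fun _ hi => lt_one_of_sum_range_eq_one hs hq hsum hi) hsum
end

section
/- The set S has Lebesgue measure zero. -/
open Filter

/-!
Let `T` be the expanding map of `[0, 1)` that sends each interval `[β k, β (k + 1))` affinely onto
`[0, 1)`. Under Lebesgue measure the pair (first digit of `x`, `T x`) has the law `ν ⊗ Lebesgue`,
where `ν {k} = q k`. Hence `T` preserves Lebesgue measure and the digits read off along `T`-orbits
are pairwise independent with law `ν`, so the strong law of large numbers gives the mean of the
digits of almost every `x`. A digit sequence that is not the one read off along the orbit of its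
`Q_s`-value has its value in the countable set of right endpoints of cylinders.
-/

open MeasureTheory ProbabilityTheory Set Topology

section StrongLaw

variable {α β γ δ : Type*} [MeasurableSpace α] [MeasurableSpace β] [MeasurableSpace γ]
  [MeasurableSpace δ] {μ : Measure α} {ν : Measure β}

lemma indepFun_comp_measurePreserving {T : α → β} {f : β → γ} {g : β → δ}
    (hT : MeasurePreserving T μ ν) (hf : Measurable f) (hg : Measurable g)
    (h : IndepFun f g ν) : IndepFun (f ∘ T) (g ∘ T) μ := by
  rw [indepFun_iff_measure_inter_preimage_eq_mul] at h ⊢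
  intro A B hA hB
  rw [preimage_comp, preimage_comp, ← preimage_inter,
    hT.measure_preimage ((hf hA).inter (hg hB)).nullMeasurableSet,
    hT.measure_preimage (hf hA).nullMeasurableSet, hT.measure_preimage (hg hB).nullMeasurableSet,
    h A B hA hB]

lemma identDistrib_comp_measurePreserving {T : α → β} {f : β → γ}
    (hT : MeasurePreserving T μ ν) (hf : Measurable f) : IdentDistrib (f ∘ T) f μ ν where
  aemeasurable_fst := (hf.comp hT.measurable).aemeasurable
  aemeasurable_snd := hf.aemeasurable
  map_eq := by rw [← Measure.map_map hf hT.measurable, hT.map_eq]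

lemma pairwise_indepFun_comp_iterate {T : α → α} {X : α → γ} (hT : MeasurePreserving T μ μ)
    (hX : Measurable X) (h : IndepFun X T μ) :
    Pairwise fun i j : ℕ => IndepFun (X ∘ T^[i]) (X ∘ T^[j]) μ := by
  have indep_of_lt : ∀ {i j : ℕ}, i < j → IndepFun (X ∘ T^[i]) (X ∘ T^[j]) μ := by
    intro i j hij
    obtain ⟨m, rfl⟩ : ∃ m, j = m + 1 + i := ⟨j - i - 1, by omega⟩
    have hXm : Measurable (X ∘ T^[m]) := hX.comp (hT.measurable.iterate m)
    have hind : IndepFun X (X ∘ T^[m + 1]) μ := h.comp measurable_id hXm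
    rw [Function.iterate_add T (m + 1) i]
    exact indepFun_comp_measurePreserving (hT.iterate i) hX (hXm.comp hT.measurable) hind
  intro i j hij
  rcases hij.lt_or_gt with hlt | hgt
  · exact indep_of_lt hlt
  · exact (indep_of_lt hgt).symm

theorem ae_tendsto_birkhoffAverage_of_indepFun {E : Type*} [NormedAddCommGroup E]
    [NormedSpace ℝ E] [CompleteSpace E] [MeasurableSpace E] [BorelSpace E] {T : α → α} {X : α → E}
    (hT : MeasurePreserving T μ μ) (hX : Measurable X) (hint : Integrable X μ)
    (h : IndepFun X T μ) :
    ∀ᵐ x ∂μ, Tendsto (fun n => birkhoffAverage ℝ T X n x) atTop (𝓝 (∫ x, X x ∂μ)) :=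
  strong_law_ae (fun i => X ∘ T^[i]) hint (pairwise_indepFun_comp_iterate hT hX h)
    fun i => identDistrib_comp_measurePreserving (hT.iterate i) hX

end StrongLaw

/-- The partial sum `β_k` of the weights: the left endpoint of the cylinder of first digit `k`. -/
noncomputable def qsBeta (q : ℕ → ℝ) (k : ℕ) : ℝ := ∑ i ∈ Finset.range k, q i

/-- The affine map of `[0, 1)` onto the cylinder of first digit `k`; it prepends the digit `k` to a
`Q_s`-expansion. -/
noncomputable def qsBranch (q : ℕ → ℝ) (k : ℕ) (t : ℝ) : ℝ := qsBeta q k + q k * t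

open Classical in
/-- The first `Q_s`-digit of `x ∈ [0, 1)`, namely the largest `k < s` with `β_k ≤ x`. -/
noncomputable def qsDigit (s : ℕ) (q : ℕ → ℝ) (x : ℝ) : ℕ :=
  Nat.findGreatest (fun k => qsBeta q k ≤ x) (s - 1)

/-- The shift of `Q_s`-expansions as a map of `[0, 1)`: it deletes the first digit. -/
noncomputable def qsShift (s : ℕ) (q : ℕ → ℝ) (x : ℝ) : ℝ :=
  (x - qsBeta q (qsDigit s q x)) / q (qsDigit s q x)

/-- Lebesgue measure on `[0, 1)`, as a measure on `ℝ`. -/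
noncomputable def unitVolume : Measure ℝ := volume.restrict (Ico 0 1)

/-- The law of a single `Q_s`-digit. -/
noncomputable def qsDigitLaw (s : ℕ) (q : ℕ → ℝ) : Measure ℕ :=
  ∑ k ∈ Finset.range s, ENNReal.ofReal (q k) • Measure.dirac k

/-- The right endpoints of the cylinders of all ranks, one for each word `l`: the empty word gives
`1`. Words with letters outside `{0, ..., s - 1}` are admitted, as only countability matters. -/
def qsEndpoints (q : ℕ → ℝ) : Set ℝ := range fun l : List ℕ => l.foldr (qsBranch q) 1

variable {s : ℕ} {q : ℕ → ℝ}

section Digit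

variable {k : ℕ} {x t : ℝ}

lemma qsBeta_zero : qsBeta q 0 = 0 := Finset.sum_range_zero _

lemma qsBeta_succ (k : ℕ) : qsBeta q (k + 1) = qsBeta q k + q k := Finset.sum_range_succ _ _

lemma qsBeta_le_qsBeta (hq : ∀ i < s, 0 ≤ q i) {m n : ℕ} (hmn : m ≤ n) (hn : n ≤ s) :
    qsBeta q m ≤ qsBeta q n :=
  Finset.sum_le_sum_of_subset_of_nonneg (Finset.range_mono hmn) fun i hi _ =>
    hq i ((Finset.mem_range.1 hi).trans_le hn)

lemma qsBeta_nonneg (hq : ∀ i < s, 0 ≤ q i) (hk : k ≤ s) : 0 ≤ qsBeta q k :=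
  qsBeta_zero (q := q) ▸ qsBeta_le_qsBeta hq (Nat.zero_le k) hk

lemma qsBeta_add_le_one (hq : ∀ i < s, 0 ≤ q i) (hsum : qsBeta q s = 1) (hk : k < s) :
    qsBeta q k + q k ≤ 1 := by
  rw [← qsBeta_succ, ← hsum]
  exact qsBeta_le_qsBeta hq hk le_rfl

lemma pos_of_qsBeta_eq_one (hsum : qsBeta q s = 1) : 0 < s := by
  rw [Nat.pos_iff_ne_zero]
  rintro rfl
  exact zero_ne_one (qsBeta_zero.symm.trans hsum)

lemma qsDigit_lt (hs : 0 < s) : qsDigit s q x < s :=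
  (Nat.findGreatest_le _).trans_lt (Nat.sub_lt hs one_pos)

lemma qsDigit_eq_of_mem_Ico (hq : ∀ i < s, 0 ≤ q i) (hk : k < s)
    (hx : x ∈ Ico (qsBeta q k) (qsBeta q (k + 1))) : qsDigit s q x = k := by
  classical
  rw [qsDigit, Nat.findGreatest_eq_iff]
  refine ⟨Nat.le_sub_one_of_lt hk, fun _ => hx.1, fun n hkn hn => ?_⟩
  exact not_le.2 (hx.2.trans_le (qsBeta_le_qsBeta hq hkn (hn.trans (Nat.sub_le s 1))))

lemma mem_Ico_qsBeta_qsDigit (hsum : qsBeta q s = 1) (hx : x ∈ Ico (0 : ℝ) 1) :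
    x ∈ Ico (qsBeta q (qsDigit s q x)) (qsBeta q (qsDigit s q x + 1)) := by
  classical
  have hs := pos_of_qsBeta_eq_one hsum
  obtain ⟨hle, hself, hgreatest⟩ := Nat.findGreatest_eq_iff.1 (rfl : qsDigit s q x = _)
  constructor
  · by_cases hzero : qsDigit s q x = 0
    · rw [hzero, qsBeta_zero]
      exact hx.1
    · exact hself hzero
  · rcases hle.eq_or_lt with hlast | hlt
    · rw [hlast, Nat.sub_add_cancel hs, hsum]
      exact hx.2
    · exact not_le.1 (hgreatest (Nat.lt_succ_self _) hlt)

lemma weight_qsDigit_pos (hsum : qsBeta q s = 1) (hx : x ∈ Ico (0 : ℝ) 1) :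
    0 < q (qsDigit s q x) := by
  have h := mem_Ico_qsBeta_qsDigit hsum hx
  rw [qsBeta_succ] at h
  linarith [h.1, h.2]

lemma qsBranch_mem_Ico (hk : 0 < q k) (ht : t ∈ Ico (0 : ℝ) 1) :
    qsBranch q k t ∈ Ico (qsBeta q k) (qsBeta q (k + 1)) := by
  rw [qsBeta_succ, qsBranch]
  exact ⟨le_add_of_nonneg_right (mul_nonneg hk.le ht.1),
    add_lt_add_right (mul_lt_of_lt_one_right hk ht.2) _⟩

lemma qsDigit_qsBranch (hq : ∀ i < s, 0 ≤ q i) (hks : k < s) (hk : 0 < q k)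
    (ht : t ∈ Ico (0 : ℝ) 1) : qsDigit s q (qsBranch q k t) = k :=
  qsDigit_eq_of_mem_Ico hq hks (qsBranch_mem_Ico hk ht)

lemma qsShift_qsBranch (hq : ∀ i < s, 0 ≤ q i) (hks : k < s) (hk : 0 < q k)
    (ht : t ∈ Ico (0 : ℝ) 1) : qsShift s q (qsBranch q k t) = t := by
  rw [qsShift, qsDigit_qsBranch hq hks hk ht, qsBranch, add_sub_cancel_left,
    mul_div_cancel_left₀ _ hk.ne']

lemma qsBranch_qsShift (hsum : qsBeta q s = 1) (hx : x ∈ Ico (0 : ℝ) 1) :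
    qsBranch q (qsDigit s q x) (qsShift s q x) = x := by
  rw [qsBranch, qsShift, mul_div_cancel₀ _ (weight_qsDigit_pos hsum hx).ne', add_sub_cancel]

lemma qsShift_mem_Ico (hsum : qsBeta q s = 1) (hx : x ∈ Ico (0 : ℝ) 1) :
    qsShift s q x ∈ Ico (0 : ℝ) 1 := by
  have hpos := weight_qsDigit_pos hsum hx
  have h := mem_Ico_qsBeta_qsDigit hsum hx
  rw [qsBeta_succ] at h
  exact ⟨div_nonneg (sub_nonneg.2 h.1) hpos.le,
    (div_lt_one hpos).2 (sub_lt_iff_lt_add'.2 h.2)⟩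

lemma preimage_qsDigit_inter_preimage_qsShift (hq : ∀ i < s, 0 ≤ q i) (hsum : qsBeta q s = 1)
    (hks : k < s) (hk : 0 < q k) (C : Set ℝ) :
    qsDigit s q ⁻¹' {k} ∩ qsShift s q ⁻¹' C ∩ Ico 0 1 = qsBranch q k '' (C ∩ Ico 0 1) := by
  apply Subset.antisymm
  · rintro x ⟨⟨rfl, hC⟩, hx⟩
    exact ⟨qsShift s q x, ⟨hC, qsShift_mem_Ico hsum hx⟩, qsBranch_qsShift hsum hx⟩
  · rintro _ ⟨t, ⟨hC, ht⟩, rfl⟩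
    have hmem := qsBranch_mem_Ico hk ht
    rw [qsBeta_succ] at hmem
    exact ⟨⟨qsDigit_qsBranch hq hks hk ht, by rwa [mem_preimage, qsShift_qsBranch hq hks hk ht]⟩,
      (qsBeta_nonneg hq hks.le).trans hmem.1, hmem.2.trans_le (qsBeta_add_le_one hq hsum hks)⟩

end Digit

section Law

instance : IsProbabilityMeasure unitVolume := ⟨by simp [unitVolume]⟩

lemma volume_image_qsBranch (k : ℕ) (C : Set ℝ) :
    volume (qsBranch q k '' C) = ENNReal.ofReal |q k| * volume C := by
  have himage : qsBranch q k '' C = (qsBeta q k + ·) '' ((q k • ·) '' C) := by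
    rw [image_image]
    rfl
  rw [himage, image_add_left, measure_preimage_add, image_smul, Measure.addHaar_smul,
    Module.finrank_self, pow_one]

lemma measurable_qsDigit : Measurable (qsDigit s q) := by
  classical
  exact measurable_findGreatest fun _ _ => measurableSet_Ici

lemma measurable_qsShift : Measurable (qsShift s q) :=
  (measurable_id.sub ((measurable_of_countable (qsBeta q)).comp measurable_qsDigit)).div
    ((measurable_of_countable q).comp measurable_qsDigit)

lemma qsDigitLaw_singleton (k : ℕ) :
    qsDigitLaw s q {k} = if k < s then ENNReal.ofReal (q k) else 0 := by
  simp [qsDigitLaw, Measure.finsetSum_apply, Set.indicator_apply]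

lemma isProbabilityMeasure_qsDigitLaw (hq : ∀ i < s, 0 ≤ q i) (hsum : qsBeta q s = 1) :
    IsProbabilityMeasure (qsDigitLaw s q) where
  measure_univ := by
    rw [← ENNReal.ofReal_one, ← hsum, qsBeta,
      ENNReal.ofReal_sum_of_nonneg fun i hi => hq i (Finset.mem_range.1 hi)]
    simp [qsDigitLaw]

lemma integrable_qsDigitLaw {E : Type*} [NormedAddCommGroup E] (f : ℕ → E) :
    Integrable f (qsDigitLaw s q) :=
  integrable_finsetSum_measure.2 fun _ _ =>
    (integrable_dirac enorm_lt_top).smul_measure ENNReal.ofReal_ne_top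

lemma integral_qsDigitLaw {E : Type*} [NormedAddCommGroup E] [NormedSpace ℝ E] [CompleteSpace E]
    (hq : ∀ i < s, 0 ≤ q i) (f : ℕ → E) :
    ∫ k, f k ∂qsDigitLaw s q = ∑ k ∈ Finset.range s, q k • f k := by
  rw [qsDigitLaw, integral_finsetSum_measure fun k _ =>
    (integrable_dirac enorm_lt_top).smul_measure ENNReal.ofReal_ne_top]
  refine Finset.sum_congr rfl fun k hk => ?_
  rw [integral_smul_measure, integral_dirac, ENNReal.toReal_ofReal (hq k (Finset.mem_range.1 hk))]

lemma unitVolume_qsDigit_singleton_inter_qsShift (hq : ∀ i < s, 0 ≤ q i) (hsum : qsBeta q s = 1)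
    (k : ℕ) {C : Set ℝ} (hC : MeasurableSet C) :
    unitVolume (qsDigit s q ⁻¹' {k} ∩ qsShift s q ⁻¹' C) = qsDigitLaw s q {k} * unitVolume C := by
  rw [qsDigitLaw_singleton, unitVolume, Measure.restrict_apply
    ((measurable_qsDigit (measurableSet_singleton k)).inter (measurable_qsShift hC)),
    Measure.restrict_apply hC]
  by_cases hk : k < s ∧ 0 < q k
  · rw [preimage_qsDigit_inter_preimage_qsShift hq hsum hk.1 hk.2, volume_image_qsBranch,
      abs_of_pos hk.2, if_pos hk.1]
  · have hempty : qsDigit s q ⁻¹' {k} ∩ qsShift s q ⁻¹' C ∩ Ico 0 1 = ∅ := by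
      rw [eq_empty_iff_forall_notMem]
      rintro x ⟨⟨rfl, -⟩, hx⟩
      exact hk ⟨qsDigit_lt (pos_of_qsBeta_eq_one hsum), weight_qsDigit_pos hsum hx⟩
    have hweight : (if k < s then ENNReal.ofReal (q k) else 0) = 0 := by
      rw [ite_eq_right_iff, ENNReal.ofReal_eq_zero]
      exact fun hks => not_lt.1 fun hpos => hk ⟨hks, hpos⟩
    rw [hempty, measure_empty, hweight, zero_mul]

theorem map_qsDigit_prodMk_qsShift (hq : ∀ i < s, 0 ≤ q i) (hsum : qsBeta q s = 1) :
    unitVolume.map (fun x => (qsDigit s q x, qsShift s q x)) =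
      (qsDigitLaw s q).prod unitVolume := by
  have := isProbabilityMeasure_qsDigitLaw hq hsum
  refine (Measure.prod_eq fun A C hA hC => ?_).symm
  have hlaw : (unitVolume.restrict (qsShift s q ⁻¹' C)).map (qsDigit s q) =
      unitVolume C • qsDigitLaw s q := by
    refine Measure.ext_of_singleton fun k => ?_
    have hk := measurable_qsDigit (s := s) (q := q) (measurableSet_singleton k)
    rw [Measure.map_apply measurable_qsDigit (measurableSet_singleton k),
      Measure.restrict_apply hk, unitVolume_qsDigit_singleton_inter_qsShift hq hsum k hC,
      Measure.smul_apply, smul_eq_mul, mul_comm]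
  rw [Measure.map_apply (measurable_qsDigit.prodMk measurable_qsShift) (hA.prod hC),
    mk_preimage_prod, ← Measure.restrict_apply (measurable_qsDigit hA),
    ← Measure.map_apply measurable_qsDigit hA, hlaw, Measure.smul_apply, smul_eq_mul, mul_comm]

lemma map_qsDigit (hq : ∀ i < s, 0 ≤ q i) (hsum : qsBeta q s = 1) :
    unitVolume.map (qsDigit s q) = qsDigitLaw s q := by
  rw [← Measure.fst_map_prodMk measurable_qsShift, map_qsDigit_prodMk_qsShift hq hsum,
    Measure.fst_prod]

lemma measurePreserving_qsShift (hq : ∀ i < s, 0 ≤ q i) (hsum : qsBeta q s = 1) :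
    MeasurePreserving (qsShift s q) unitVolume unitVolume := by
  have := isProbabilityMeasure_qsDigitLaw hq hsum
  refine ⟨measurable_qsShift, ?_⟩
  rw [← Measure.snd_map_prodMk measurable_qsDigit, map_qsDigit_prodMk_qsShift hq hsum,
    Measure.snd_prod]

lemma indepFun_qsDigit_qsShift (hq : ∀ i < s, 0 ≤ q i) (hsum : qsBeta q s = 1) :
    IndepFun (qsDigit s q) (qsShift s q) unitVolume := by
  rw [indepFun_iff_map_prod_eq_prod_map_map measurable_qsDigit.aemeasurable
    measurable_qsShift.aemeasurable, map_qsDigit_prodMk_qsShift hq hsum, map_qsDigit hq hsum,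
    (measurePreserving_qsShift hq hsum).map_eq]

theorem ae_tendsto_birkhoffAverage_qsDigit {E : Type*} [NormedAddCommGroup E] [NormedSpace ℝ E]
    [CompleteSpace E] (hq : ∀ i < s, 0 ≤ q i) (hsum : qsBeta q s = 1) (f : ℕ → E) :
    ∀ᵐ x ∂unitVolume, Tendsto (fun n => birkhoffAverage ℝ (qsShift s q) (f ∘ qsDigit s q) n x)
      atTop (𝓝 (∑ k ∈ Finset.range s, q k • f k)) := by
  borelize E
  have hf : Measurable f := measurable_of_countable f
  have hlaw : Integrable f (unitVolume.map (qsDigit s q)) :=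
    map_qsDigit hq hsum ▸ integrable_qsDigitLaw f
  have hmean : ∫ x, (f ∘ qsDigit s q) x ∂unitVolume = ∑ k ∈ Finset.range s, q k • f k := by
    rw [← integral_qsDigitLaw hq, ← map_qsDigit hq hsum]
    exact (integral_map measurable_qsDigit.aemeasurable hlaw.aestronglyMeasurable).symm
  rw [← hmean]
  exact ae_tendsto_birkhoffAverage_of_indepFun (measurePreserving_qsShift hq hsum)
    (hf.comp measurable_qsDigit) (hlaw.comp_measurable measurable_qsDigit)
    ((indepFun_qsDigit_qsShift hq hsum).comp hf measurable_id)

end Law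

section Value

variable {a : ℕ → ℕ}

lemma prod_weight_nonneg (hq : ∀ i < s, 0 ≤ q i) (ha : ∀ n, a n < s) (n : ℕ) :
    0 ≤ ∏ j ∈ Finset.range n, q (a j) :=
  Finset.prod_nonneg fun j _ => hq _ (ha j)

lemma qsVal_term_nonneg (hq : ∀ i < s, 0 ≤ q i) (ha : ∀ n, a n < s) (n : ℕ) :
    0 ≤ qsBeta q (a n) * ∏ j ∈ Finset.range n, q (a j) :=
  mul_nonneg (qsBeta_nonneg hq (ha n).le) (prod_weight_nonneg hq ha n)

lemma sum_qsVal_term_add_prod_le_one (hq : ∀ i < s, 0 ≤ q i) (hsum : qsBeta q s = 1)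
    (ha : ∀ n, a n < s) (n : ℕ) :
    ∑ k ∈ Finset.range n, qsBeta q (a k) * ∏ j ∈ Finset.range k, q (a j) +
      ∏ j ∈ Finset.range n, q (a j) ≤ 1 := by
  induction n with
  | zero => simp
  | succ n ih =>
    have hstep := mul_le_of_le_one_left (prod_weight_nonneg hq ha n)
      (qsBeta_add_le_one hq hsum (ha n))
    rw [Finset.sum_range_succ, Finset.prod_range_succ]
    linarith

lemma sum_qsVal_term_le_one (hq : ∀ i < s, 0 ≤ q i) (hsum : qsBeta q s = 1)
    (ha : ∀ n, a n < s) (n : ℕ) :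
    ∑ k ∈ Finset.range n, qsBeta q (a k) * ∏ j ∈ Finset.range k, q (a j) ≤ 1 :=
  (le_add_of_nonneg_right (prod_weight_nonneg hq ha n)).trans
    (sum_qsVal_term_add_prod_le_one hq hsum ha n)

lemma qsVal_mem_Icc (hq : ∀ i < s, 0 ≤ q i) (hsum : qsBeta q s = 1) (ha : ∀ n, a n < s) :
    qsVal q a ∈ Icc (0 : ℝ) 1 :=
  ⟨tsum_nonneg (qsVal_term_nonneg hq ha),
    Real.tsum_le_of_sum_range_le (qsVal_term_nonneg hq ha) (sum_qsVal_term_le_one hq hsum ha)⟩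

lemma qsVal_eq_qsBranch (hq : ∀ i < s, 0 ≤ q i) (hsum : qsBeta q s = 1) (ha : ∀ n, a n < s) :
    qsVal q a = qsBranch q (a 0) (qsVal q fun n => a (n + 1)) := by
  have hsummable : Summable fun k => qsBeta q (a k) * ∏ j ∈ Finset.range k, q (a j) :=
    summable_of_sum_range_le (qsVal_term_nonneg hq ha) (sum_qsVal_term_le_one hq hsum ha)
  calc qsVal q a
      = qsBeta q (a 0) + ∑' k, qsBeta q (a (k + 1)) * ∏ j ∈ Finset.range (k + 1), q (a j) := by
        rw [← mul_one (qsBeta q (a 0)), ← Finset.prod_range_zero fun j => q (a j)]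
        exact hsummable.tsum_eq_zero_add
    _ = qsBeta q (a 0) +
          ∑' k, q (a 0) * (qsBeta q (a (k + 1)) * ∏ j ∈ Finset.range k, q (a (j + 1))) := by
        simp only [Finset.prod_range_succ', mul_comm (q (a 0)), mul_assoc]
    _ = qsBranch q (a 0) (qsVal q fun n => a (n + 1)) := by
        rw [tsum_mul_left]
        rfl

lemma countable_qsEndpoints : (qsEndpoints q).Countable := countable_range _

lemma one_mem_qsEndpoints : 1 ∈ qsEndpoints q := ⟨[], rfl⟩

lemma qsBranch_mem_qsEndpoints {t : ℝ} (k : ℕ) (ht : t ∈ qsEndpoints q) :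
    qsBranch q k t ∈ qsEndpoints q := by
  obtain ⟨l, rfl⟩ := ht
  exact ⟨k :: l, rfl⟩

lemma qsBranch_mem_qsEndpoints_of_weight_eq_zero {k : ℕ} (hk : q k = 0) (t : ℝ) :
    qsBranch q k t ∈ qsEndpoints q := by
  have hconst : qsBranch q k t = qsBranch q k 1 := by simp only [qsBranch, hk, zero_mul]
  exact hconst ▸ qsBranch_mem_qsEndpoints k one_mem_qsEndpoints

lemma qsVal_mem_Ico_of_notMem_qsEndpoints (hq : ∀ i < s, 0 ≤ q i) (hsum : qsBeta q s = 1)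
    (ha : ∀ n, a n < s) (h : qsVal q a ∉ qsEndpoints q) : qsVal q a ∈ Ico (0 : ℝ) 1 := by
  obtain ⟨hnonneg, hle⟩ := qsVal_mem_Icc hq hsum ha
  exact ⟨hnonneg, hle.lt_of_ne fun hone => h (hone ▸ one_mem_qsEndpoints)⟩

lemma qsVal_tail_notMem_qsEndpoints (hq : ∀ i < s, 0 ≤ q i) (hsum : qsBeta q s = 1)
    (ha : ∀ n, a n < s) (h : qsVal q a ∉ qsEndpoints q) :
    qsVal q (fun n => a (n + 1)) ∉ qsEndpoints q := by
  rw [qsVal_eq_qsBranch hq hsum ha] at h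
  exact fun htail => h (qsBranch_mem_qsEndpoints _ htail)

lemma weight_pos_of_qsVal_notMem_qsEndpoints (hq : ∀ i < s, 0 ≤ q i) (hsum : qsBeta q s = 1)
    (ha : ∀ n, a n < s) (h : qsVal q a ∉ qsEndpoints q) : 0 < q (a 0) := by
  rw [qsVal_eq_qsBranch hq hsum ha] at h
  exact (hq _ (ha 0)).lt_of_ne fun hzero =>
    h (qsBranch_mem_qsEndpoints_of_weight_eq_zero hzero.symm _)

lemma qsDigit_qsVal (hq : ∀ i < s, 0 ≤ q i) (hsum : qsBeta q s = 1) (ha : ∀ n, a n < s)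
    (h : qsVal q a ∉ qsEndpoints q) : qsDigit s q (qsVal q a) = a 0 := by
  rw [qsVal_eq_qsBranch hq hsum ha]
  exact qsDigit_qsBranch hq (ha 0) (weight_pos_of_qsVal_notMem_qsEndpoints hq hsum ha h)
    (qsVal_mem_Ico_of_notMem_qsEndpoints hq hsum (fun n => ha (n + 1))
      (qsVal_tail_notMem_qsEndpoints hq hsum ha h))

lemma qsShift_qsVal (hq : ∀ i < s, 0 ≤ q i) (hsum : qsBeta q s = 1) (ha : ∀ n, a n < s)
    (h : qsVal q a ∉ qsEndpoints q) :
    qsShift s q (qsVal q a) = qsVal q fun n => a (n + 1) := by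
  rw [qsVal_eq_qsBranch hq hsum ha]
  exact qsShift_qsBranch hq (ha 0) (weight_pos_of_qsVal_notMem_qsEndpoints hq hsum ha h)
    (qsVal_mem_Ico_of_notMem_qsEndpoints hq hsum (fun n => ha (n + 1))
      (qsVal_tail_notMem_qsEndpoints hq hsum ha h))

theorem qsDigit_iterate_qsShift_qsVal (hq : ∀ i < s, 0 ≤ q i) (hsum : qsBeta q s = 1)
    (ha : ∀ n, a n < s) (h : qsVal q a ∉ qsEndpoints q) (n : ℕ) :
    qsDigit s q ((qsShift s q)^[n] (qsVal q a)) = a n := by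
  induction n generalizing a with
  | zero => exact qsDigit_qsVal hq hsum ha h
  | succ n ih =>
    rw [Function.iterate_succ_apply, qsShift_qsVal hq hsum ha h]
    exact ih (fun n => ha (n + 1)) (qsVal_tail_notMem_qsEndpoints hq hsum ha h)

end Value

theorem Sset_measure_zero_general {E : Type*} [NormedAddCommGroup E] [NormedSpace ℝ E]
    [CompleteSpace E] (hq : ∀ i < s, 0 ≤ q i) (hsum : ∑ i ∈ Finset.range s, q i = 1) (f : ℕ → E) :
    volume {x | ∃ a : ℕ → ℕ, (∀ n, a n < s) ∧ x = qsVal q a ∧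
      ¬ Tendsto (fun n : ℕ => (n : ℝ)⁻¹ • ∑ i ∈ Finset.range n, f (a i)) atTop
        (𝓝 (∑ k ∈ Finset.range s, q k • f k))} = 0 := by
  have hslln :=
    (ae_restrict_iff' measurableSet_Ico).1 (ae_tendsto_birkhoffAverage_qsDigit hq hsum f)
  have hend : ∀ᵐ x, x ∉ qsEndpoints q := countable_qsEndpoints.ae_notMem volume
  rw [measure_eq_zero_iff_ae_notMem]
  filter_upwards [hslln, hend]
  rintro _ htendsto hx ⟨a, ha, rfl, hnot⟩
  apply hnot
  simpa only [birkhoffAverage, birkhoffSum, Function.comp_apply,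
    qsDigit_iterate_qsShift_qsVal hq hsum ha hx] using
    htendsto (qsVal_mem_Ico_of_notMem_qsEndpoints hq hsum ha hx)

/-- The set `S` has Lebesgue measure zero. -/
theorem Sset_measure_zero (s : ℕ) (hs : 2 ≤ s) (q : ℕ → ℝ)
    (hq : ∀ i < s, 0 < q i) (hsum : ∑ i ∈ Finset.range s, q i = 1) :
    MeasureTheory.volume (Sset s q) = 0 := by
  refine measure_mono_null ?_
    (Sset_measure_zero_general (fun i hi => (hq i hi).le) hsum (Nat.cast : ℕ → ℝ))
  rintro x ⟨a, ha, hx, hnot⟩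
  refine ⟨a, ha, hx, fun h => hnot ⟨_, h.congr fun n => ?_⟩⟩
  rw [smul_eq_mul, div_eq_inv_mul]
end

section
/- The set M_0 is dense in the interval [0,1]. -/
open Filter

/-- The value of a ternary digit sequence: `val₃(a) = ∑_{k≥0} a k · 3^{-(k+1)}`. -/
noncomputable def val3 (a : ℕ → ℕ) : ℝ :=
  ∑' k : ℕ, (a k : ℝ) / 3 ^ (k + 1)

/-- For `i ∈ {0,1,2}`, `Mset i` is the set of values of ternary digit sequences for which
the asymptotic mean of digits and the frequency of the digit `i` both exist and are
equal. -/
noncomputable def Mset (i : ℕ) : Set ℝ :=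
  {x | ∃ a : ℕ → ℕ, (∀ n, a n < 3) ∧ x = val3 a ∧
    ∃ L : ℝ,
      Filter.Tendsto (fun n => (∑ k ∈ Finset.range n, (a k : ℝ)) / n)
        Filter.atTop (nhds L) ∧
      Filter.Tendsto
        (fun n => (((Finset.range n).filter (fun j => a j = i)).card : ℝ) / n)
        Filter.atTop (nhds L)}

/-!
The value map `Real.ofDigits` from the product space of ternary digit sequences onto `[0, 1]` is
continuous, so it carries dense sets to dense sets. Asymptotic means and frequencies depend only on
the tail of a sequence, and sequences with a prescribed tail are dense in the product space.
It therefore suffices to find one sequence whose mean equals its frequency of zeros: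
`0, 1, 0, 1, …` has both equal to `1 / 2`.
-/

open scoped Topology

/-- The sequence `f` has asymptotic mean `L`: its Cesàro averages converge to `L`. The frequency of
a digit is the asymptotic mean of its indicator sequence. -/
def HasMean (f : ℕ → ℝ) (L : ℝ) : Prop :=
  Tendsto (fun n : ℕ => (∑ k ∈ Finset.range n, f k) / n) atTop (𝓝 L)

namespace HasMean

variable {f g : ℕ → ℝ} {L C : ℝ} {p : ℕ}

theorem of_tendsto_sub (hg : HasMean g L) (h : Tendsto (fun k => f k - g k) atTop (𝓝 0)) :
    HasMean f L := by
  have hsum := hg.add h.cesaro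
  rw [add_zero] at hsum
  refine hsum.congr fun n => ?_
  rw [Finset.sum_sub_distrib]
  ring

theorem of_eventuallyEq (hg : HasMean g L) (h : f =ᶠ[atTop] g) : HasMean f L :=
  hg.of_tendsto_sub <| tendsto_const_nhds.congr' <| h.mono fun _ hk => (sub_eq_zero.2 hk).symm

theorem of_abs_sum_sub_le (h : ∀ n, |∑ k ∈ Finset.range n, (f k - L)| ≤ C) : HasMean f L := by
  have hdev : Tendsto (fun n : ℕ => (∑ k ∈ Finset.range n, (f k - L)) / n) atTop (𝓝 0) := by
    refine squeeze_zero_norm (fun n => ?_) (tendsto_const_div_atTop_nhds_zero_nat C)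
    rw [norm_div, Real.norm_eq_abs, Real.norm_natCast]
    gcongr
    exact h n
  have hmean := hdev.const_add L
  rw [add_zero] at hmean
  refine hmean.congr' ?_
  filter_upwards [eventually_ne_atTop 0] with n hn
  rw [Finset.sum_sub_distrib, Finset.sum_const, Finset.card_range, nsmul_eq_mul]
  field_simp
  ring

theorem of_periodic (hf : f.Periodic p) (hp : p ≠ 0) :
    HasMean f ((∑ k ∈ Finset.range p, f k) / p) := by
  set L : ℝ := (∑ k ∈ Finset.range p, f k) / p with hL
  set D : ℕ → ℝ := fun n => ∑ k ∈ Finset.range n, (f k - L)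
  have hDp : D p = 0 := by
    simp only [D, Finset.sum_sub_distrib, Finset.sum_const, Finset.card_range, nsmul_eq_mul]
    rw [hL, mul_div_cancel₀ _ (Nat.cast_ne_zero.2 hp), sub_self]
  have hD : D.Periodic p := fun n => by
    simp only [D, add_comm n p, Finset.sum_range_add] at hDp ⊢
    simp only [hDp, zero_add, add_comm p, hf _]
  refine of_abs_sum_sub_le (C := ∑ k ∈ Finset.range p, |D k|) fun n => ?_
  calc |D n| = |D (n % p)| := by rw [hD.map_mod_nat]
    _ ≤ ∑ k ∈ Finset.range p, |D k| :=
      Finset.single_le_sum (f := fun k => |D k|) (fun _ _ => abs_nonneg _)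
        (Finset.mem_range.2 (Nat.mod_lt n (Nat.pos_of_ne_zero hp)))

end HasMean

theorem hasMean_ite_iff_tendsto_card_filter {P : ℕ → Prop} [DecidablePred P] {L : ℝ} :
    HasMean (fun k => if P k then 1 else 0) L ↔
      Tendsto (fun n => (((Finset.range n).filter P).card : ℝ) / n) atTop (𝓝 L) := by
  simp only [HasMean, Finset.natCast_card_filter]

theorem dense_setOf_eventuallyEq_cofinite {ι : Type*} {X : ι → Type*}
    [∀ i, TopologicalSpace (X i)] (c : ∀ i, X i) :
    Dense {x : ∀ i, X i | ∀ᶠ i in cofinite, x i = c i} := by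
  classical
  refine fun x => mem_closure_iff_nhds.2 fun U hU => ?_
  obtain ⟨I, hI⟩ := exists_finset_piecewise_mem_of_mem_nhds hU c
  refine ⟨I.piecewise x c, hI, I.eventually_cofinite_notMem.mono fun i hi => ?_⟩
  exact I.piecewise_eq_of_notMem x c hi

theorem Icc_subset_closure_image_ofDigits {b : ℕ} (hb : 1 < b) {S : Set (ℕ → Fin b)}
    (hS : Dense S) : Set.Icc 0 1 ⊆ closure (Real.ofDigits '' S) :=
  calc Set.Icc 0 1 ⊆ Real.ofDigits '' (Set.univ : Set (ℕ → Fin b)) := Real.ofDigits_SurjOn hb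
    _ = Real.ofDigits '' closure S := by rw [hS.closure_eq]
    _ ⊆ closure (Real.ofDigits '' S) :=
      image_closure_subset_closure_image Real.continuous_ofDigits

theorem val3_coe_eq_ofDigits (d : ℕ → Fin 3) : val3 (fun k => d k) = Real.ofDigits d := by
  simp only [val3, Real.ofDigits, Real.ofDigitsTerm, div_eq_mul_inv, Nat.cast_ofNat]

/-- The ternary digit sequences whose asymptotic mean exists and equals the frequency of the
digit `i`. -/
def meanEqFreq (i : ℕ) : Set (ℕ → Fin 3) :=
  {d | ∃ L, HasMean (fun k => ((d k : ℕ) : ℝ)) L ∧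
    HasMean (fun k => if (d k : ℕ) = i then 1 else 0) L}

theorem Mset_eq_image_ofDigits (i : ℕ) : Mset i = Real.ofDigits '' meanEqFreq i := by
  ext x
  constructor
  · rintro ⟨a, ha, rfl, L, hmean, hfreq⟩
    exact ⟨fun k => ⟨a k, ha k⟩, ⟨L, hmean, hasMean_ite_iff_tendsto_card_filter.2 hfreq⟩,
      (val3_coe_eq_ofDigits _).symm⟩
  · rintro ⟨d, ⟨L, hmean, hfreq⟩, rfl⟩
    exact ⟨fun k => d k, fun k => (d k).isLt, (val3_coe_eq_ofDigits d).symm, L, hmean,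
      hasMean_ite_iff_tendsto_card_filter.1 hfreq⟩

theorem mem_meanEqFreq_of_eventuallyEq {i : ℕ} {c d : ℕ → Fin 3} (hc : c ∈ meanEqFreq i)
    (h : d =ᶠ[atTop] c) : d ∈ meanEqFreq i := by
  obtain ⟨L, hmean, hfreq⟩ := hc
  exact ⟨L, hmean.of_eventuallyEq (h.fun_comp fun j : Fin 3 => ((j : ℕ) : ℝ)),
    hfreq.of_eventuallyEq (h.fun_comp fun j : Fin 3 => if (j : ℕ) = i then (1 : ℝ) else 0)⟩

theorem dense_meanEqFreq {i : ℕ} (h : (meanEqFreq i).Nonempty) : Dense (meanEqFreq i) := by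
  obtain ⟨c, hc⟩ := h
  refine (dense_setOf_eventuallyEq_cofinite c).mono fun d hd => ?_
  rw [Set.mem_ofPred_eq, Nat.cofinite_eq_atTop] at hd
  exact mem_meanEqFreq_of_eventuallyEq hc hd

theorem alternating_mem_meanEqFreq_zero : (fun k => if Even k then 0 else 1) ∈ meanEqFreq 0 := by
  set d : ℕ → Fin 3 := fun k => if Even k then 0 else 1
  have hd : d.Periodic 2 := fun k => by simp [d, Nat.even_add]
  have hmean (φ : Fin 3 → ℝ) : HasMean (fun k => φ (d k)) ((φ 0 + φ 1) / 2) := by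
    simpa [Finset.sum_range_succ, Function.comp_def, d] using
      HasMean.of_periodic (hd.comp φ) two_ne_zero
  refine ⟨1 / 2, ?_, ?_⟩
  · simpa using hmean fun j => ((j : ℕ) : ℝ)
  · simpa using hmean fun j => if (j : ℕ) = 0 then 1 else 0

/-- The set `M₀` is dense in the interval `[0,1]`. -/
theorem Mset_zero_dense_in_Icc :
    Set.Icc (0 : ℝ) 1 ⊆ closure (Mset 0) := by
  rw [Mset_eq_image_ofDigits]
  exact Icc_subset_closure_image_ofDigits (by norm_num)
    (dense_meanEqFreq ⟨_, alternating_mem_meanEqFreq_zero⟩)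
end

section
/- The set M_0 has Lebesgue measure zero. -/
open Filter

/-!
For a weight `w` on the base-`b` digits, the first `n` digits of a sequence attain an exceptionally
large total weight only on a set of values of exponentially small measure (Chernoff's bound), so
Borel–Cantelli gives a strong law of large numbers: outside the values of a null set, the averages
of `w` along the digits converge to the uniform mean of `w`. If the mean of the ternary digits
equals the frequency of the digit `i`, then the averages of the weight `d ↦ d - 𝟙{d = i}` tend to
`0`, whereas its uniform mean is at least `2 / 3`.
-/

open MeasureTheory Topology
open scoped Pointwise

section DigitSequences

variable {b : ℕ}

theorem volume_ofDigits_image_le_sum_tail (S : Set (ℕ → Fin b)) :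
    volume (Real.ofDigits '' S) ≤ ∑ d : Fin b, ENNReal.ofReal (b : ℝ)⁻¹ *
      volume (Real.ofDigits '' ((fun a n ↦ a (n + 1)) '' {a ∈ S | a 0 = d})) := by
  set T : Fin b → Set ℝ := fun d ↦
    Real.ofDigits '' ((fun a n ↦ a (n + 1)) '' {a ∈ S | a 0 = d})
  have hcover : Real.ofDigits '' S ⊆
      ⋃ d : Fin b, (fun x ↦ (d : ℝ) * (b : ℝ)⁻¹ + x) '' ((b : ℝ)⁻¹ • T d) := by
    rintro _ ⟨a, ha, rfl⟩
    refine Set.mem_iUnion.2 ⟨a 0, (b : ℝ)⁻¹ * Real.ofDigits fun n ↦ a (n + 1),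
      Set.smul_mem_smul_set ⟨_, ⟨a, ⟨ha, rfl⟩, rfl⟩, rfl⟩, ?_⟩
    simpa [Real.ofDigitsTerm] using (Real.ofDigits_eq_sum_add_ofDigits a 1).symm
  calc volume (Real.ofDigits '' S)
      ≤ ∑ d : Fin b, volume ((fun x ↦ (d : ℝ) * (b : ℝ)⁻¹ + x) '' ((b : ℝ)⁻¹ • T d)) :=
        (measure_mono hcover).trans (measure_iUnion_fintype_le _ _)
    _ = ∑ d : Fin b, ENNReal.ofReal (b : ℝ)⁻¹ * volume (T d) := by
        simp [Set.image_add_left, measure_preimage_add, Measure.addHaar_smul]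

theorem volume_range_ofDigits_le_one : volume (Set.range (Real.ofDigits (b := b))) ≤ 1 :=
  calc volume (Set.range (Real.ofDigits (b := b)))
      ≤ volume (Set.Icc (0 : ℝ) 1) := measure_mono <| Set.range_subset_iff.2 fun a ↦
        ⟨Real.ofDigits_nonneg a, Real.ofDigits_le_one a⟩
    _ = 1 := by simp

theorem volume_ofDigits_image_le_sum_succ_le (w : Fin b → ℝ) (n : ℕ) (c : ℝ) :
    volume (Real.ofDigits '' {a | c ≤ ∑ k ∈ Finset.range (n + 1), w (a k)}) ≤
      ∑ d : Fin b, ENNReal.ofReal (b : ℝ)⁻¹ *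
        volume (Real.ofDigits '' {a | c - w d ≤ ∑ k ∈ Finset.range n, w (a k)}) := by
  refine (volume_ofDigits_image_le_sum_tail _).trans ?_
  gcongr with d
  rintro _ ⟨a, ⟨ha, rfl⟩, rfl⟩
  rw [Set.mem_ofPred_eq, Finset.sum_range_succ'] at ha
  exact sub_le_iff_le_add.2 ha

/-- Rescaling `w` and `c` by a common `t > 0` supplies the free parameter of Chernoff's bound. -/
theorem volume_ofDigits_image_le_sum_le (w : Fin b → ℝ) (n : ℕ) (c : ℝ) :
    volume (Real.ofDigits '' {a | c ≤ ∑ k ∈ Finset.range n, w (a k)}) ≤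
      ENNReal.ofReal (Real.exp (-c) * ((b : ℝ)⁻¹ * ∑ d, Real.exp (w d)) ^ n) := by
  induction n generalizing c with
  | zero =>
    rcases le_or_gt c 0 with hc | hc
    · calc _ ≤ volume (Set.range (Real.ofDigits (b := b))) :=
            measure_mono (Set.image_subset_range _ _)
        _ ≤ 1 := volume_range_ofDigits_le_one
        _ ≤ _ := by simpa using hc
    · simp [hc.not_ge]
  | succ n ih =>
    set q : ℝ := (b : ℝ)⁻¹ * ∑ d, Real.exp (w d)
    have hexp : ∑ d : Fin b, (b : ℝ)⁻¹ * (Real.exp (-(c - w d)) * q ^ n) =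
        Real.exp (-c) * q ^ (n + 1) :=
      calc _ = ∑ d : Fin b, Real.exp (-c) * q ^ n * ((b : ℝ)⁻¹ * Real.exp (w d)) :=
            Finset.sum_congr rfl fun d _ ↦ by
              rw [neg_sub, sub_eq_neg_add, Real.exp_add]
              ring
        _ = Real.exp (-c) * q ^ n * q := by rw [← Finset.mul_sum, ← Finset.mul_sum]
        _ = _ := by rw [pow_succ, mul_assoc]
    calc _ ≤ ∑ d : Fin b, ENNReal.ofReal (b : ℝ)⁻¹ *
            volume (Real.ofDigits '' {a | c - w d ≤ ∑ k ∈ Finset.range n, w (a k)}) :=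
          volume_ofDigits_image_le_sum_succ_le w n c
      _ ≤ ∑ d : Fin b, ENNReal.ofReal (b : ℝ)⁻¹ *
            ENNReal.ofReal (Real.exp (-(c - w d)) * q ^ n) := by
          gcongr with d
          exact ih _
      _ = ENNReal.ofReal (∑ d : Fin b, (b : ℝ)⁻¹ * (Real.exp (-(c - w d)) * q ^ n)) := by
          rw [ENNReal.ofReal_sum_of_nonneg fun d _ ↦ by positivity]
          simp_rw [ENNReal.ofReal_mul (inv_nonneg.2 (Nat.cast_nonneg (α := ℝ) b))]
      _ = ENNReal.ofReal (Real.exp (-c) * q ^ (n + 1)) := by rw [hexp]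

theorem exists_pos_sum_exp_mul_lt_card {ι : Type*} [Fintype ι] {w : ι → ℝ} (hw : ∑ i, w i < 0) :
    ∃ t > 0, ∑ i, Real.exp (t * w i) < Fintype.card ι := by
  have hderiv : HasDerivAt (fun t : ℝ ↦ ∑ i, Real.exp (t * w i)) (∑ i, w i) 0 := by
    simpa using HasDerivAt.fun_sum fun i (_ : i ∈ Finset.univ) ↦
      ((hasDerivAt_id (0 : ℝ)).mul_const (w i)).exp
  obtain ⟨t, hslope, ht⟩ :=
    ((hderiv.tendsto_slope_zero_right.eventually_lt_const hw).and self_mem_nhdsWithin).exists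
  refine ⟨t, ht, ?_⟩
  simpa using neg_of_smul_neg_left hslope (inv_nonneg.2 (le_of_lt ht))

theorem volume_ofDigits_image_frequently_nonneg_eq_zero {w : Fin b → ℝ} (hw : ∑ d, w d < 0) :
    volume (Real.ofDigits '' {a | ∃ᶠ n in atTop, 0 ≤ ∑ k ∈ Finset.range n, w (a k)}) = 0 := by
  obtain ⟨t, ht, hlt⟩ := exists_pos_sum_exp_mul_lt_card hw
  set q : ℝ := (b : ℝ)⁻¹ * ∑ d, Real.exp (t * w d)
  have hq0 : 0 ≤ q := by positivity
  have hq1 : q < 1 := by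
    rw [Fintype.card_fin] at hlt
    have hb : (0 : ℝ) < b := (Finset.sum_nonneg fun d _ ↦ (Real.exp_pos _).le).trans_lt hlt
    exact (inv_mul_lt_one₀ hb).2 hlt
  set A : ℕ → Set ℝ := fun n ↦ Real.ofDigits '' {a | 0 ≤ ∑ k ∈ Finset.range n, w (a k)}
  have hA (n : ℕ) : volume (A n) ≤ ENNReal.ofReal (q ^ n) := by
    simpa [A, q, ← Finset.mul_sum, mul_nonneg_iff_of_pos_left ht] using
      volume_ofDigits_image_le_sum_le (fun d ↦ t * w d) n 0
  have hsum : ∑' n, volume (A n) ≠ ⊤ :=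
    ne_top_of_le_ne_top (summable_geometric_of_lt_one hq0 hq1).tsum_ofReal_ne_top
      (ENNReal.tsum_le_tsum hA)
  refine measure_mono_null ?_ (measure_setOfPred_frequently_eq_zero hsum)
  rintro _ ⟨a, ha, rfl⟩
  exact ha.mono fun n hn ↦ ⟨a, hn, rfl⟩

theorem volume_ofDigits_image_frequently_le_average_eq_zero {w : Fin b → ℝ} {c : ℝ}
    (hc : (∑ d, w d) / b < c) :
    volume (Real.ofDigits ''
      {a | ∃ᶠ n : ℕ in atTop, c ≤ (∑ k ∈ Finset.range n, w (a k)) / n}) = 0 := by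
  rcases b.eq_zero_or_pos with rfl | hb
  · simp [Set.eq_empty_of_isEmpty]
  have hneg : ∑ d, (w d - c) < 0 := by
    rw [div_lt_iff₀ (Nat.cast_pos.2 hb)] at hc
    simpa [mul_comm] using hc
  refine measure_mono_null (Set.image_mono fun a ha ↦ ?_)
    (volume_ofDigits_image_frequently_nonneg_eq_zero hneg)
  refine (ha.and_eventually (eventually_gt_atTop 0)).mono fun n ⟨hle, hn⟩ ↦ ?_
  rw [le_div_iff₀ (Nat.cast_pos.2 hn)] at hle
  simpa [mul_comm] using hle

theorem volume_ofDigits_image_frequently_average_le_eq_zero {w : Fin b → ℝ} {c : ℝ}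
    (hc : c < (∑ d, w d) / b) :
    volume (Real.ofDigits ''
      {a | ∃ᶠ n : ℕ in atTop, (∑ k ∈ Finset.range n, w (a k)) / n ≤ c}) = 0 := by
  have hneg : (∑ d, -w d) / b < -c := by simpa [neg_div] using hc
  simpa [neg_div] using volume_ofDigits_image_frequently_le_average_eq_zero hneg

theorem volume_ofDigits_image_not_tendsto_average_eq_zero (w : Fin b → ℝ) :
    volume (Real.ofDigits '' {a | ¬ Tendsto (fun n : ℕ ↦ (∑ k ∈ Finset.range n, w (a k)) / n)
      atTop (𝓝 ((∑ d, w d) / b))}) = 0 := by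
  set m : ℝ := (∑ d, w d) / b
  set avg : (ℕ → Fin b) → ℕ → ℝ := fun a n ↦ (∑ k ∈ Finset.range n, w (a k)) / n
  have hcover : {a | ¬ Tendsto (avg a) atTop (𝓝 m)} ⊆ ⋃ j : ℕ,
      {a | ∃ᶠ n in atTop, m + 1 / (j + 1) ≤ avg a n} ∪
        {a | ∃ᶠ n in atTop, avg a n ≤ m - 1 / (j + 1)} := by
    intro a ha
    rw [Set.mem_ofPred_eq, Metric.nhds_basis_ball_inv_nat_succ.tendsto_right_iff] at ha
    push Not at ha
    obtain ⟨j, -, hj⟩ := ha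
    refine Set.mem_iUnion.2 ⟨j, frequently_or_distrib.1 <| hj.mono fun n hn ↦ ?_⟩
    rw [Metric.mem_ball, not_lt, Real.dist_eq, le_abs] at hn
    exact hn.imp (fun h ↦ by linarith) (fun h ↦ by linarith)
  refine measure_mono_null (Set.image_mono hcover) ?_
  simp_rw [Set.image_iUnion, Set.image_union]
  refine measure_iUnion_null fun j ↦ measure_union_null ?_ ?_
  · exact volume_ofDigits_image_frequently_le_average_eq_zero
      (lt_add_of_pos_right m Nat.one_div_pos_of_nat)
  · exact volume_ofDigits_image_frequently_average_le_eq_zero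
      (sub_lt_self m Nat.one_div_pos_of_nat)

end DigitSequences

/-- The weight on ternary digits whose average along a sequence is the mean of the digits minus the
frequency of the digit `i`. -/
noncomputable def digitExcess (i : ℕ) (d : Fin 3) : ℝ :=
  d - if (d : ℕ) = i then 1 else 0

theorem sum_digitExcess_pos (i : ℕ) : 0 < ∑ d, digitExcess i d := by
  simp only [digitExcess, Fin.sum_univ_three]
  split_ifs <;> norm_num
  lia

theorem val3_eq_ofDigits (a : ℕ → Fin 3) : val3 (fun n ↦ a n) = Real.ofDigits a := by
  simp [val3, Real.ofDigits, Real.ofDigitsTerm, div_eq_mul_inv]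

theorem Mset_subset_ofDigits_image (i : ℕ) :
    Mset i ⊆ Real.ofDigits '' {a | Tendsto
      (fun n : ℕ ↦ (∑ k ∈ Finset.range n, digitExcess i (a k)) / n) atTop (𝓝 0)} := by
  rintro _ ⟨a, ha, rfl, L, hmean, hfreq⟩
  lift a to ℕ → Fin 3 using ha
  refine ⟨a, ?_, (val3_eq_ofDigits a).symm⟩
  simpa [digitExcess, Finset.sum_sub_distrib, sub_div] using hmean.sub hfreq

theorem Mset_zero_measure_zero_general (i : ℕ) : volume (Mset i) = 0 := by
  refine measure_mono_null ((Mset_subset_ofDigits_image i).trans (Set.image_mono ?_))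
    (volume_ofDigits_image_not_tendsto_average_eq_zero (digitExcess i))
  intro a hzero hmean
  have hmean_pos : 0 < (∑ d, digitExcess i d) / (3 : ℕ) :=
    div_pos (sum_digitExcess_pos i) (by norm_num)
  exact hmean_pos.ne (tendsto_nhds_unique hzero hmean)

/-- The set `M₀` has Lebesgue measure zero. -/
theorem Mset_zero_measure_zero :
    MeasureTheory.volume (Mset 0) = 0 :=
  Mset_zero_measure_zero_general 0
end

section
/- The set M_0 has the cardinality of the continuum. -/
open Filter

/-! For any binary sequence `b`, exactly one digit of each pair in `b 0, ¬ b 0, b 1, ¬ b 1, …` is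
`1`, so both digits have frequency `1 / 2`, which is then also the mean. Distinct `b` give distinct
values, since ternary expansions using only the digits `0` and `1` are unique. -/

theorem tendsto_div_of_monotone_of_tendsto_mul_div {u : ℕ → ℝ} {l : ℝ} {p : ℕ}
    (hu : Monotone u) (hp : 0 < p)
    (h : Tendsto (fun k : ℕ => u (p * k) / (p * k : ℕ)) atTop (nhds l)) :
    Tendsto (fun n : ℕ => u n / n) atTop (nhds l) := by
  refine tendsto_div_of_monotone_of_exists_subseq_tendsto_div u l hu fun a ha =>
    ⟨fun k => p * k, ?_, tendsto_id.const_mul_atTop' hp, h⟩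
  have hratio : ∀ᶠ k : ℕ in atTop, 1 ≤ (a - 1) * k :=
    (tendsto_natCast_atTop_atTop.const_mul_atTop (sub_pos.2 ha)).eventually_ge_atTop 1
  filter_upwards [hratio] with k hk
  calc ((p * (k + 1) : ℕ) : ℝ) = p * (k + 1) := by push_cast; rfl
    _ ≤ p * (a * k) := by gcongr; linarith
    _ = a * (p * k : ℕ) := by push_cast; ring

/-- The binary sequence `b 0, ¬ b 0, b 1, ¬ b 1, …`, which encodes `b` in such a way that both
values have frequency `1 / 2`. -/
def interleaveNot (b : ℕ → Bool) (n : ℕ) : Bool :=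
  if n % 2 = 0 then b (n / 2) else !b (n / 2)

theorem interleaveNot_two_mul (b : ℕ → Bool) (k : ℕ) : interleaveNot b (2 * k) = b k := by
  simp [interleaveNot]

theorem interleaveNot_two_mul_add_one (b : ℕ → Bool) (k : ℕ) :
    interleaveNot b (2 * k + 1) = !b k := by
  simp [interleaveNot, Nat.mul_add_div]

theorem interleaveNot_injective : Function.Injective interleaveNot := fun b c h => by
  funext k
  rw [← interleaveNot_two_mul b, h, interleaveNot_two_mul]

theorem count_interleaveNot_two_mul (b : ℕ → Bool) (d : Bool) (k : ℕ) :
    Nat.count (fun j => interleaveNot b j = d) (2 * k) = k := by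
  induction k with
  | zero => simp
  | succ k ih =>
    rw [Nat.mul_succ, Nat.count_succ, Nat.count_succ, ih, interleaveNot_two_mul,
      interleaveNot_two_mul_add_one]
    cases b k <;> cases d <;> rfl

theorem tendsto_count_interleaveNot_div (b : ℕ → Bool) (d : Bool) :
    Tendsto (fun n : ℕ => (Nat.count (fun j => interleaveNot b j = d) n : ℝ) / n) atTop
      (nhds (1 / 2)) := by
  refine tendsto_div_of_monotone_of_tendsto_mul_div
    (Nat.mono_cast.comp (Nat.count_monotone _)) two_pos
    (tendsto_const_nhds.congr' ?_)
  filter_upwards [eventually_ne_atTop 0] with k hk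
  rw [count_interleaveNot_two_mul]
  push_cast
  field_simp

theorem sum_range_toNat_eq_count {R : Type*} [AddCommMonoidWithOne R] (c : ℕ → Bool) (n : ℕ) :
    ∑ k ∈ Finset.range n, ((c k).toNat : R) = Nat.count (fun j => c j = true) n := by
  rw [Nat.count_eq_card_filter_range, Finset.natCast_card_filter]
  refine Finset.sum_congr rfl fun k _ => ?_
  cases c k <;> simp

theorem val3_toNat_eq_cantorFunction (c : ℕ → Bool) :
    val3 (fun n => (c n).toNat) = 1 / 3 * Cardinal.cantorFunction (1 / 3) c := by
  rw [val3, Cardinal.cantorFunction, ← tsum_mul_left]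
  refine tsum_congr fun k => ?_
  cases hk : c k <;> simp [Cardinal.cantorFunctionAux, hk, pow_succ, mul_comm]

theorem val3_toNat_injective :
    Function.Injective fun c : ℕ → Bool => val3 fun n => (c n).toNat := fun c d h => by
  simp only [val3_toNat_eq_cantorFunction] at h
  exact Cardinal.cantorFunction_injective (by norm_num) (by norm_num)
    (mul_left_cancel₀ (by norm_num) h)

theorem val3_interleaveNot_mem_Mset (b : ℕ → Bool) {i : ℕ} (hi : i < 2) :
    val3 (fun n => (interleaveNot b n).toNat) ∈ Mset i := by
  obtain ⟨d, rfl⟩ : ∃ d : Bool, d.toNat = i := by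
    interval_cases i
    exacts [⟨false, rfl⟩, ⟨true, rfl⟩]
  refine ⟨_, fun n => (Bool.toNat_lt _).trans (by norm_num), rfl, 1 / 2, ?_, ?_⟩
  · simpa only [sum_range_toNat_eq_count] using tendsto_count_interleaveNot_div b true
  · have htoNat : ∀ c : Bool, c.toNat = d.toNat ↔ c = d := by revert d; decide
    simpa only [htoNat, Nat.count_eq_card_filter_range] using
      tendsto_count_interleaveNot_div b d

theorem Mset_zero_cardinality_continuum_general {i : ℕ} (hi : i < 2) :
    Cardinal.mk (Mset i) = Cardinal.continuum := by
  refine le_antisymm ((Cardinal.mk_set_le _).trans Cardinal.mk_real.le) ?_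
  have hinj : Function.Injective fun b : ℕ → Bool =>
      (⟨_, val3_interleaveNot_mem_Mset b hi⟩ : Mset i) := fun _ _ h =>
    interleaveNot_injective (val3_toNat_injective (congrArg Subtype.val h))
  simpa using Cardinal.mk_le_of_injective hinj

/-- The set `M₀` has the cardinality of the continuum. -/
theorem Mset_zero_cardinality_continuum :
    Cardinal.mk (Mset 0) = Cardinal.continuum :=
  Mset_zero_cardinality_continuum_general zero_lt_two
end
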